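/- arXiv:1710.09891 — 3 statements merged into one kernel-verified Lean document; each statement's English description precedes it below -/
import Mathlib

section
/- Let f(k) = ⌈1.1 · ln(2.5·k)⌉. Then for every integer k ≥ 5, the inequality |(log p_{f(k)+k−3})² − log p_{f(k)+k−3}| < (k+1)·(f(k)+1) − p_{f(k)+k−3} holds, where p_m denotes the m-th prime number (p_1 = 2, p_2 = 3, …) and log denotes the base-10 logarithm. -/
/-- `nthPrime m` is the `m`-th prime, with `nthPrime 1 = 2`. -/
noncomputable def nthPrime (m : ℕ) : ℕ := Nat.nth Nat.Prime (m - 1)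

/-- `f k = ⌈1.1 · ln(2.5k)⌉` (a positive integer for `k ≥ 1`), as a natural number. -/
noncomputable def f (k : ℕ) : ℕ := (⌈(1.1 : ℝ) * Real.log (2.5 * k)⌉ : ℤ).toNat


/-! ### Part 1: a Chebyshev type lower bound for `ψ` -/

/-- Modulus attached to an entry of the weight list. -/
def wd (p : ℤ × ℕ × ℕ × ℕ × ℕ) : ℕ := 2 ^ p.2.1 * 3 ^ p.2.2.1 * 5 ^ p.2.2.2.1 * 7 ^ p.2.2.2.2

/-- Weights (an entry `(w, a, b, c, e)` stands for weight `w` at `2^a 3^b 5^c 7^e`). -/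
def wl : List (ℤ × ℕ × ℕ × ℕ × ℕ) :=
  [(2, 0, 0, 0, 0), (-2, 1, 0, 0, 0), (-2, 0, 1, 0, 0), (-2, 0, 0, 1, 0), (2, 1, 1, 0, 0),
   (-2, 0, 0, 0, 1), (-2, 2, 1, 0, 0), (2, 1, 0, 0, 1), (-2, 1, 2, 0, 0), (2, 2, 0, 1, 0),
   (2, 3, 1, 0, 0), (-2, 2, 0, 0, 1), (2, 0, 0, 1, 1), (2, 2, 2, 0, 0), (-2, 3, 0, 1, 0),
   (-2, 1, 1, 0, 1), (2, 3, 0, 0, 1), (-3, 1, 0, 1, 1), (-1, 3, 2, 0, 0), (2, 2, 1, 0, 1),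
   (2, 1, 2, 0, 1), (1, 2, 0, 1, 1), (-1, 3, 1, 0, 1), (-2, 2, 2, 1, 0), (4, 1, 1, 1, 1),
   (-4, 2, 2, 0, 1), (2, 3, 0, 1, 1), (2, 3, 2, 1, 0), (-3, 2, 1, 1, 1), (2, 3, 2, 0, 1), (1,
   1, 2, 1, 1), (1, 3, 1, 1, 1), (3, 2, 2, 1, 1), (1, 3, 2, 1, 1)]

/-- The step function attached to a weight list. -/
def wF (l : List (ℤ × ℕ × ℕ × ℕ × ℕ)) (m : ℕ) : ℤ := (l.map fun p => p.1 * ((m / wd p : ℕ) : ℤ)).sum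

theorem wd_pos (p) : 0 < wd p := by unfold wd; positivity

theorem wF_check : ∀ r < 2520, wF wl r ≤ 2 := by decide +kernel

theorem wl_dvd : ∀ p ∈ wl, wd p ∣ 2520 := by decide +kernel

theorem wF_period (l : List (ℤ × ℕ × ℕ × ℕ × ℕ)) (hl : ∀ p ∈ l, wd p ∣ 2520) (q r : ℕ) :
    wF l (2520 * q + r) = q * wF l 2520 + wF l r := by
  induction l with
  | nil => simp [wF]
  | cons p l ih =>
    have h1 := ih (fun x hx => hl x (List.mem_cons_of_mem _ hx))
    obtain ⟨c, hc⟩ := hl p (by simp)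
    have hp := wd_pos p
    have e1 : (2520 * q + r) / wd p = c * q + r / wd p := by
      rw [hc, mul_assoc, add_comm, Nat.add_mul_div_left _ _ hp, add_comm]
    have e2 : 2520 / wd p = c := by rw [hc]; exact Nat.mul_div_cancel_left c hp
    simp only [wF, List.map_cons, List.sum_cons] at h1 ⊢
    rw [h1, e1, e2]; push_cast; ring

theorem wF_le (m : ℕ) : wF wl m ≤ 2 := by
  rw [← Nat.div_add_mod m 2520, wF_period wl wl_dvd]
  have h0 : wF wl 2520 = 0 := by decide +kernel
  rw [h0, mul_zero, zero_add]
  exact wF_check _ (Nat.mod_lt _ (by norm_num))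

open ArithmeticFunction in
theorem log_fact_eq (N : ℕ) :
    Real.log (N.factorial) = ∑ n ∈ Finset.Ioc 0 N, vonMangoldt n * ((N / n : ℕ) : ℝ) := by
  rw [← sum_Ioc_mul_zeta_eq_sum, vonMangoldt_mul_zeta]
  induction N with
  | zero => simp
  | succ n ih =>
    rw [Finset.sum_Ioc_succ_top (by omega), ← ih, Nat.factorial_succ]
    push_cast
    rw [Real.log_mul (by positivity) (by positivity), add_comm]
    simp [ArithmeticFunction.log_apply]

open ArithmeticFunction in
theorem log_fact_div_eq (N d : ℕ) :
    Real.log ((N / d).factorial) =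
      ∑ n ∈ Finset.Ioc 0 N, vonMangoldt n * ((N / n / d : ℕ) : ℝ) := by
  rw [log_fact_eq]
  have hsub : Finset.Ioc 0 (N / d) ⊆ Finset.Ioc 0 N :=
    Finset.Ioc_subset_Ioc_right (Nat.div_le_self _ _)
  rw [← Finset.sum_subset hsub]
  · apply Finset.sum_congr rfl
    intro n _
    rw [Nat.div_div_eq_div_mul, Nat.div_div_eq_div_mul, mul_comm d n]
  · intro n hn hn'
    have h : N / n / d = 0 := by
      rw [Nat.div_div_eq_div_mul, mul_comm, ← Nat.div_div_eq_div_mul]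
      apply Nat.div_eq_of_lt
      simp only [Finset.mem_Ioc] at hn hn'
      omega
    simp [h]

open ArithmeticFunction in
theorem wsum_eq (l : List (ℤ × ℕ × ℕ × ℕ × ℕ)) (N : ℕ) :
    (l.map fun p => (p.1 : ℝ) * Real.log ((N / wd p).factorial)).sum =
      ∑ n ∈ Finset.Ioc 0 N, vonMangoldt n * ((wF l (N / n) : ℤ) : ℝ) := by
  induction l with
  | nil => simp [wF]
  | cons p l ih =>
    simp only [List.map_cons, List.sum_cons, wF] at ih ⊢
    rw [ih, log_fact_div_eq, Finset.mul_sum, ← Finset.sum_add_distrib]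
    apply Finset.sum_congr rfl
    intro n _
    rw [Int.cast_add, Int.cast_mul, Int.cast_natCast]
    ring

theorem two_psi_ge (N : ℕ) :
    (wl.map fun p => (p.1 : ℝ) * Real.log ((N / wd p).factorial)).sum ≤ 2 * Chebyshev.psi N := by
  rw [wsum_eq, Chebyshev.psi, Nat.floor_natCast, Finset.mul_sum]
  apply Finset.sum_le_sum
  intro n _
  have h : ((wF wl (N / n) : ℤ) : ℝ) ≤ 2 := by exact_mod_cast wF_le _
  rw [mul_comm]
  exact mul_le_mul_of_nonneg_right h ArithmeticFunction.vonMangoldt_nonneg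

/-- Elementary Stirling bounds on integers. -/
theorem fact_bounds (M : ℕ) (hM : 1 ≤ M) :
    M * Real.log M - M + 1 ≤ Real.log M.factorial ∧
      Real.log M.factorial ≤ M * Real.log M - M + 1 + Real.log M := by
  induction M, hM using Nat.le_induction with
  | base => simp
  | succ n hn ih =>
    have hn0 : (0 : ℝ) < n := by exact_mod_cast hn
    rw [Nat.factorial_succ]
    push_cast
    rw [Real.log_mul (by positivity) (by positivity)]
    have hu : Real.log ((n + 1 : ℝ) / n) ≤ (n + 1 : ℝ) / n - 1 := Real.log_le_sub_one_of_pos (by positivity)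
    have hl : 1 - ((n + 1 : ℝ) / n)⁻¹ ≤ Real.log ((n + 1 : ℝ) / n) :=
      Real.one_sub_inv_le_log_of_pos (by positivity)
    rw [Real.log_div (by positivity) (by positivity)] at hu hl
    have hu' : (n : ℝ) * (Real.log (n + 1) - Real.log n) ≤ 1 := by
      have := mul_le_mul_of_nonneg_left hu hn0.le
      have e : (n : ℝ) * ((n + 1 : ℝ) / n - 1) = 1 := by field_simp; ring
      linarith
    have hl' : 1 ≤ ((n : ℝ) + 1) * (Real.log (n + 1) - Real.log n) := by
      have := mul_le_mul_of_nonneg_left hl (by positivity : (0 : ℝ) ≤ n + 1)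
      have e : ((n : ℝ) + 1) * (1 - ((n + 1 : ℝ) / n)⁻¹) = 1 := by field_simp; ring
      linarith
    constructor
    · nlinarith [ih.1]
    · nlinarith [ih.2]

/-- Elementary Stirling bounds for the factorial of a floor. -/
theorem floor_fact_bounds (N d : ℕ) (hd : 0 < d) (hN : d ≤ N) :
    |Real.log ((N / d).factorial) -
      ((N : ℝ) / d * Real.log ((N : ℝ) / d) - (N : ℝ) / d + 1)| ≤ Real.log N := by
  set M := N / d with hM
  have hM1 : 1 ≤ M := (Nat.one_le_div_iff hd).2 hN
  have hd0 : (0 : ℝ) < d := by exact_mod_cast hd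
  have hN0 : (0 : ℝ) < N := by exact_mod_cast (lt_of_lt_of_le hd hN)
  set y : ℝ := (N : ℝ) / d with hy
  have hM0 : (1 : ℝ) ≤ M := by exact_mod_cast hM1
  have h1 : (M : ℝ) ≤ y := Nat.cast_div_le
  have h2 : y < M + 1 := by
    rw [hy, div_lt_iff₀ hd0]
    have h3 : N < (M + 1) * d := Nat.lt_mul_of_div_lt (Nat.lt_succ_self _) hd
    exact_mod_cast h3
  have hy0 : 0 < y := by linarith
  have hyN : Real.log y ≤ Real.log N := by
    apply Real.log_le_log hy0
    rw [hy]; exact div_le_self hN0.le (by exact_mod_cast hd)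
  have hMy : Real.log M ≤ Real.log y := Real.log_le_log (by linarith) h1
  have hlM : 0 ≤ Real.log M := Real.log_nonneg hM0
  have hu : Real.log (y / M) ≤ y / M - 1 := Real.log_le_sub_one_of_pos (by positivity)
  have hl : 1 - (y / M)⁻¹ ≤ Real.log (y / M) := Real.one_sub_inv_le_log_of_pos (by positivity)
  rw [Real.log_div (by positivity) (by positivity)] at hu hl
  have hu' : (M : ℝ) * (Real.log y - Real.log M) ≤ y - M := by
    have := mul_le_mul_of_nonneg_left hu (by linarith : (0 : ℝ) ≤ M)
    have e : (M : ℝ) * (y / M - 1) = y - M := by field_simp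
    linarith
  have hl' : y - M ≤ y * (Real.log y - Real.log M) := by
    have := mul_le_mul_of_nonneg_left hl hy0.le
    have e : y * (1 - (y / M)⁻¹) = y - M := by field_simp
    linarith
  obtain ⟨f1, f2⟩ := fact_bounds M hM1
  rw [abs_le]
  constructor
  · nlinarith
  · nlinarith

theorem wsum_ge (l : List (ℤ × ℕ × ℕ × ℕ × ℕ)) (N : ℕ) (hl : ∀ p ∈ l, wd p ≤ N) :
    (l.map fun p => (p.1 : ℝ) *
        ((N : ℝ) / wd p * Real.log ((N : ℝ) / wd p) - (N : ℝ) / wd p + 1)).sum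
      - (l.map fun p => |(p.1 : ℝ)|).sum * Real.log N ≤
    (l.map fun p => (p.1 : ℝ) * Real.log ((N / wd p).factorial)).sum := by
  induction l with
  | nil => simp
  | cons p l ih =>
    have h1 := ih (fun x hx => hl x (List.mem_cons_of_mem _ hx))
    have h2 := floor_fact_bounds N (wd p) (wd_pos p) (hl p (by simp))
    simp only [List.map_cons, List.sum_cons]
    have h3 := mul_le_mul_of_nonneg_left h2 (abs_nonneg (p.1 : ℝ))
    rw [← abs_mul, abs_le] at h3
    nlinarith [h3.1]

theorem wsum_main (l : List (ℤ × ℕ × ℕ × ℕ × ℕ)) (N : ℕ) (hN : 0 < N) :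
    (l.map fun p => (p.1 : ℝ) *
        ((N : ℝ) / wd p * Real.log ((N : ℝ) / wd p) - (N : ℝ) / wd p + 1)).sum =
      N * (Real.log N - 1) * (((l.map fun p => (p.1 : ℚ) / wd p).sum : ℚ) : ℝ)
      - N * ((((l.map fun p => (p.1 : ℚ) * p.2.1 / wd p).sum : ℚ) : ℝ) * Real.log 2
        + (((l.map fun p => (p.1 : ℚ) * p.2.2.1 / wd p).sum : ℚ) : ℝ) * Real.log 3
        + (((l.map fun p => (p.1 : ℚ) * p.2.2.2.1 / wd p).sum : ℚ) : ℝ) * Real.log 5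
        + (((l.map fun p => (p.1 : ℚ) * p.2.2.2.2 / wd p).sum : ℚ) : ℝ) * Real.log 7)
      + (((l.map fun p => (p.1 : ℚ)).sum : ℚ) : ℝ) := by
  induction l with
  | nil => simp
  | cons p l ih =>
    simp only [List.map_cons, List.sum_cons]
    rw [ih]
    have hN0 : (0 : ℝ) < N := by exact_mod_cast hN
    have hd0 : (0 : ℝ) < wd p := by exact_mod_cast wd_pos p
    have e : Real.log (wd p : ℝ) = p.2.1 * Real.log 2 + p.2.2.1 * Real.log 3
        + p.2.2.2.1 * Real.log 5 + p.2.2.2.2 * Real.log 7 := by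
      unfold wd
      push_cast
      rw [Real.log_mul (by positivity) (by positivity), Real.log_mul (by positivity) (by positivity),
        Real.log_mul (by positivity) (by positivity)]
      simp only [Real.log_pow]
    rw [Real.log_div hN0.ne' hd0.ne', e]
    push_cast
    ring

theorem psi_lower (N : ℕ) (hN : 2520 ≤ N) :
    0.9407 * (N : ℝ) - 34.5 * Real.log N ≤ Chebyshev.psi N := by
  have h1 := two_psi_ge N
  have h2 := wsum_ge wl N (fun p hp => (Nat.le_of_dvd (by norm_num) (wl_dvd p hp)).trans hN)
  rw [wsum_main wl N (by omega)] at h2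
  have s0 : (wl.map fun p => (p.1 : ℚ) / wd p).sum = 0 := by decide +kernel
  have s2 : (wl.map fun p => (p.1 : ℚ) * p.2.1 / wd p).sum = -823 / 1260 := by decide +kernel
  have s3 : (wl.map fun p => (p.1 : ℚ) * p.2.2.1 / wd p).sum = -17 / 30 := by decide +kernel
  have s5 : (wl.map fun p => (p.1 : ℚ) * p.2.2.2.1 / wd p).sum = -13 / 42 := by decide +kernel
  have s7 : (wl.map fun p => (p.1 : ℚ) * p.2.2.2.2 / wd p).sum = -19 / 120 := by decide +kernel
  have s1 : (wl.map fun p => (p.1 : ℚ)).sum = 5 := by decide +kernel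
  have sa : (wl.map fun p => |(p.1 : ℝ)|).sum = 69 := by
    norm_num [wl]
  rw [s0, s1, s2, s3, s5, s7, sa] at h2
  have l7 : 5 * Real.log 2 + Real.log 3 + 2 * Real.log 5 ≤ 4 * Real.log 7 := by
    have : Real.log (2 ^ 5 * 3 * 5 ^ 2) ≤ Real.log (7 ^ 4) := Real.log_le_log (by norm_num) (by norm_num)
    rw [Real.log_mul (by norm_num) (by norm_num), Real.log_mul (by norm_num) (by norm_num)] at this
    simp only [Real.log_pow] at this
    push_cast at this
    linarith
  have l2 := Real.log_two_gt_d9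
  have l3 := Real.log_three_gt_d9
  have l5 := Real.log_five_gt_d9
  have hA : (0.9407 : ℝ) * 2 ≤ 823 / 1260 * Real.log 2 + 17 / 30 * Real.log 3
      + 13 / 42 * Real.log 5 + 19 / 120 * Real.log 7 := by
    linarith
  have h3 := mul_le_mul_of_nonneg_left hA (Nat.cast_nonneg N : (0 : ℝ) ≤ N)
  push_cast at h2
  linarith


/-! ### Part 2: lower bounds for `θ` and for the prime counting function -/

theorem psi_sub_theta_bound (x : ℝ) (hx : 100000 ≤ x) :
    Chebyshev.psi x - Chebyshev.theta x ≤ 3.1 * √x := by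
  have hx0 : 0 < x := by linarith
  have h := Chebyshev.psi_sub_theta_le_psi_add_psi_add_psi x
  have l4 : Real.log 4 = 2 * Real.log 2 := by
    rw [show (4 : ℝ) = 2 ^ 2 by norm_num, Real.log_pow]; norm_num
  have l2 := Real.log_two_lt_d9
  have l2' := Real.log_two_gt_d9
  have l3 := Real.log_three_lt_d9
  set s := √x with hs
  have hss : s * s = x := Real.mul_self_sqrt hx0.le
  have hs0 : 0 < s := Real.sqrt_pos.2 hx0
  have hs316 : 316 ≤ s := by nlinarith
  set r := √s with hr
  have hrr : r * r = s := Real.mul_self_sqrt hs0.le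
  have hr0 : 0 < r := Real.sqrt_pos.2 hs0
  have hr17 : 17.77 ≤ r := by nlinarith
  -- first term
  have e2 : x ^ (2 : ℝ)⁻¹ = s := by rw [hs, Real.sqrt_eq_rpow]; norm_num
  have t2 : Chebyshev.psi (x ^ (2 : ℝ)⁻¹) ≤ 2.06 * s := by
    rw [e2]
    have h1 := Chebyshev.psi_le (x := s) (by linarith)
    rw [← hr] at h1
    have h2 : Real.log s = 2 * Real.log r := by
      rw [← hrr, Real.log_mul hr0.ne' hr0.ne']; ring
    have h3 : Real.log (r / 18) ≤ r / 18 - 1 := Real.log_le_sub_one_of_pos (by positivity)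
    have h4 : Real.log 18 = Real.log 2 + 2 * Real.log 3 := by
      rw [show (18 : ℝ) = 2 * 3 ^ 2 by norm_num, Real.log_mul (by norm_num) (by norm_num),
        Real.log_pow]; norm_num
    rw [Real.log_div hr0.ne' (by norm_num), h4] at h3
    have h5 : Real.log s ≤ 0.333 * r := by rw [h2]; linarith
    have h6 : 2 * r * Real.log s ≤ 2 * r * (0.333 * r) :=
      mul_le_mul_of_nonneg_left h5 (by positivity)
    rw [l4] at h1
    nlinarith
  -- second term
  have t3 : Chebyshev.psi (x ^ (3 : ℝ)⁻¹) ≤ 0.82 * s := by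
    have h1 := Chebyshev.psi_le_const_mul_self (x := x ^ (3 : ℝ)⁻¹) (by positivity)
    set t := x ^ (6 : ℝ)⁻¹ with ht
    have ht0 : 0 < t := by positivity
    have e3 : x ^ (3 : ℝ)⁻¹ = t ^ 2 := by
      rw [ht, ← Real.rpow_natCast, ← Real.rpow_mul hx0.le]; norm_num
    have es : s = t ^ 3 := by
      rw [hs, Real.sqrt_eq_rpow, ht, ← Real.rpow_natCast, ← Real.rpow_mul hx0.le]; norm_num
    have h6 : 6.8 ≤ t := by
      by_contra hlt
      push Not at hlt
      have : t ^ 3 < 6.8 ^ 3 := pow_lt_pow_left₀ hlt ht0.le (by norm_num)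
      rw [← es] at this
      norm_num at this
      linarith
    rw [e3, l4] at h1
    rw [e3, es]
    have : 0 ≤ t ^ 2 := by positivity
    nlinarith [mul_le_mul_of_nonneg_left h6 this]
  have t5 : Chebyshev.psi (x ^ (5 : ℝ)⁻¹) ≤ 0.2 * s := by
    have h1 := Chebyshev.psi_le_const_mul_self (x := x ^ (5 : ℝ)⁻¹) (by positivity)
    set t := x ^ (10 : ℝ)⁻¹ with ht
    have ht0 : 0 < t := by positivity
    have e3 : x ^ (5 : ℝ)⁻¹ = t ^ 2 := by
      rw [ht, ← Real.rpow_natCast, ← Real.rpow_mul hx0.le]; norm_num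
    have es : s = t ^ 5 := by
      rw [hs, Real.sqrt_eq_rpow, ht, ← Real.rpow_natCast, ← Real.rpow_mul hx0.le]; norm_num
    have h6 : 3.1 ≤ t := by
      by_contra hlt
      push Not at hlt
      have : t ^ 5 < 3.1 ^ 5 := pow_lt_pow_left₀ hlt ht0.le (by norm_num)
      rw [← es] at this
      norm_num at this
      linarith
    rw [e3, l4] at h1
    rw [e3, es]
    have h7 : (3.1 : ℝ) ^ 3 ≤ t ^ 3 := pow_le_pow_left₀ (by norm_num) h6 3
    have : 0 ≤ t ^ 2 := by positivity
    nlinarith [mul_le_mul_of_nonneg_left h7 this]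
  linarith

theorem theta_lower (x : ℝ) (hx : 100000 ≤ x) :
    0.9407 * x - 4.4 * √x ≤ Chebyshev.theta x := by
  have hx0 : 0 < x := by linarith
  have h1 := psi_sub_theta_bound x hx
  have h2 := psi_lower ⌊x⌋₊ (Nat.le_floor (by norm_num; linarith))
  rw [← Chebyshev.psi_eq_psi_coe_floor] at h2
  have h3 := Nat.lt_floor_add_one x
  have h4 := Nat.floor_le hx0.le
  have h5 : Real.log (⌊x⌋₊ : ℝ) ≤ Real.log x := Real.log_le_log (by linarith) h4
  set s := √x with hs
  have hss : s * s = x := Real.mul_self_sqrt hx0.le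
  have hs0 : 0 < s := Real.sqrt_pos.2 hx0
  have hs316 : 316 ≤ s := by nlinarith
  have e1 : Real.log x = 2 * Real.log s := by
    rw [← hss, Real.log_mul hs0.ne' hs0.ne']; ring
  have e2 : Real.log (s / 320) ≤ s / 320 - 1 := Real.log_le_sub_one_of_pos (by positivity)
  have e3 : Real.log 320 = 6 * Real.log 2 + Real.log 5 := by
    rw [show (320 : ℝ) = 2 ^ 6 * 5 by norm_num, Real.log_mul (by norm_num) (by norm_num),
      Real.log_pow]; norm_num
  rw [Real.log_div hs0.ne' (by norm_num), e3] at e2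
  have l2 := Real.log_two_lt_d9
  have l5 := Real.log_five_lt_d9
  linarith

theorem theta_tier1 (x : ℝ) (hx : 100000 ≤ x) : 0.9267 * x ≤ Chebyshev.theta x := by
  have h := theta_lower x hx
  have hss : √x * √x = x := Real.mul_self_sqrt (by linarith)
  have hs : 316.2 ≤ √x := Real.le_sqrt_of_sq_le (by norm_num; linarith)
  nlinarith

theorem theta_tier2 (x : ℝ) (hx : 4000000 ≤ x) : 0.9385 * x ≤ Chebyshev.theta x := by
  have h := theta_lower x (by linarith)
  have hss : √x * √x = x := Real.mul_self_sqrt (by linarith)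
  have hs : 2000 ≤ √x := Real.le_sqrt_of_sq_le (by norm_num; linarith)
  nlinarith

theorem pi_lower (A X x : ℝ) (hA : 0 ≤ A) (hX : 2 ≤ X) (hXx : X ≤ x)
    (h : ∀ t, X ≤ t → A * t ≤ Chebyshev.theta t) :
    A * (x / Real.log x + (x - X) / Real.log x ^ 2) ≤ (Nat.primeCounting ⌊x⌋₊ : ℝ) := by
  have hx2 : 2 ≤ x := hX.trans hXx
  have hlx : 0 < Real.log x := Real.log_pos (by linarith)
  rw [Chebyshev.primeCounting_eq_theta_div_log_add_integral hx2]
  have hintg := Chebyshev.integrableOn_theta_div_id_mul_log_sq x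
  have i1 : IntervalIntegrable (fun t ↦ Chebyshev.theta t / (t * Real.log t ^ 2))
      MeasureTheory.volume 2 X := by
    rw [intervalIntegrable_iff_integrableOn_Icc_of_le hX]
    exact hintg.mono_set (Set.Icc_subset_Icc_right hXx)
  have i2 : IntervalIntegrable (fun t ↦ Chebyshev.theta t / (t * Real.log t ^ 2))
      MeasureTheory.volume X x := by
    rw [intervalIntegrable_iff_integrableOn_Icc_of_le hXx]
    exact hintg.mono_set (Set.Icc_subset_Icc_left hX)
  rw [← intervalIntegral.integral_add_adjacent_intervals i1 i2]
  have p1 : 0 ≤ ∫ t in (2 : ℝ)..X, Chebyshev.theta t / (t * Real.log t ^ 2) := by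
    apply intervalIntegral.integral_nonneg hX
    intro t ht
    have : 0 ≤ t := by linarith [ht.1]
    exact div_nonneg (Chebyshev.theta_nonneg t) (by positivity)
  have p2 : A * ((x - X) / Real.log x ^ 2) ≤
      ∫ t in X..x, Chebyshev.theta t / (t * Real.log t ^ 2) := by
    have e : A * ((x - X) / Real.log x ^ 2) = ∫ _t in X..x, A / Real.log x ^ 2 := by
      rw [intervalIntegral.integral_const, smul_eq_mul]; ring
    rw [e]
    apply intervalIntegral.integral_mono_on hXx (by simp) i2
    intro t ht
    have ht0 : 0 < t := by linarith [ht.1]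
    have hlt : 0 < Real.log t := Real.log_pos (by linarith [ht.1])
    have hle : Real.log t ≤ Real.log x := Real.log_le_log ht0 ht.2
    have hle2 : Real.log t ^ 2 ≤ Real.log x ^ 2 := pow_le_pow_left₀ hlt.le hle 2
    calc A / Real.log x ^ 2 ≤ A / Real.log t ^ 2 :=
          div_le_div_of_nonneg_left hA (by positivity) hle2
      _ = A * t / (t * Real.log t ^ 2) := by field_simp
      _ ≤ _ := div_le_div_of_nonneg_right (h t ht.1) (by positivity)
  have p3 : A * (x / Real.log x) ≤ Chebyshev.theta x / Real.log x := by
    rw [← mul_div_assoc]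
    exact div_le_div_of_nonneg_right (h x hXx) hlx.le
  rw [mul_add]
  linarith


/-! ### Part 3: reduction to a lower bound for the prime counting function -/

theorem f_bounds (k : ℕ) (hk : 5 ≤ k) :
    1.1 * Real.log (2.5 * k) ≤ (f k : ℝ) ∧ (f k : ℝ) < 1.1 * Real.log (2.5 * k) + 1 := by
  have hk' : (5 : ℝ) ≤ k := by exact_mod_cast hk
  have hpos : 0 ≤ Real.log (2.5 * k) := Real.log_nonneg (by linarith)
  have hc : 0 ≤ ⌈(1.1 : ℝ) * Real.log (2.5 * k)⌉ := Int.ceil_nonneg (by positivity)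
  have e : (f k : ℝ) = ((⌈(1.1 : ℝ) * Real.log (2.5 * k)⌉ : ℤ) : ℝ) := by
    have : ((f k : ℕ) : ℤ) = ⌈(1.1 : ℝ) * Real.log (2.5 * k)⌉ := Int.toNat_of_nonneg hc
    exact_mod_cast this
  rw [e]
  exact ⟨Int.le_ceil _, Int.ceil_lt_add_one _⟩

theorem nthPrime_le {n Y : ℕ} (hn : 1 ≤ n) (h : n ≤ Nat.primeCounting Y) : nthPrime n ≤ Y := by
  unfold nthPrime
  have : Nat.nth Nat.Prime (n - 1) < Y + 1 := by
    apply Nat.nth_lt_of_lt_count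
    change n - 1 < Nat.primeCounting Y
    omega
  omega

theorem concl (k c Y : ℕ) (hc : 1 ≤ c) (hY : Y < 10 ^ c) (hsum : Y + c ^ 2 ≤ (k + 1) * (f k + 1))
    (hn : 1 ≤ f k + k - 3) (hpi : f k + k - 3 ≤ Nat.primeCounting Y) :
    |(Real.logb 10 (nthPrime (f k + k - 3)))^2 - Real.logb 10 (nthPrime (f k + k - 3))| <
      ((k : ℝ) + 1) * ((f k : ℝ) + 1) - (nthPrime (f k + k - 3) : ℝ) := by
  have hP := nthPrime_le hn hpi
  have hpr : 1 ≤ nthPrime (f k + k - 3) := (Nat.prime_nth_prime _).one_lt.le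
  set P := nthPrime (f k + k - 3)
  have hP1 : (1 : ℝ) ≤ P := by exact_mod_cast hpr
  have hl0 : 0 ≤ Real.logb 10 P := Real.logb_nonneg (by norm_num) hP1
  have hlc : Real.logb 10 P < c := by
    rw [Real.logb_lt_iff_lt_rpow (by norm_num) (by linarith), Real.rpow_natCast]
    exact_mod_cast lt_of_le_of_lt hP hY
  have hsum' : (P : ℝ) + (c : ℝ) ^ 2 ≤ ((k : ℝ) + 1) * ((f k : ℝ) + 1) := by
    have : P + c ^ 2 ≤ (k + 1) * (f k + 1) := by omega
    exact_mod_cast this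
  have hc1 : (1 : ℝ) ≤ c := by exact_mod_cast hc
  have : |(Real.logb 10 P) ^ 2 - Real.logb 10 P| < (c : ℝ) ^ 2 := by
    rw [abs_lt]
    constructor <;> nlinarith
  linarith

theorem k_le_three_pow (k : ℕ) (hk : 5 ≤ k) : k ≤ 3 ^ f k := by
  have hk' : (5 : ℝ) ≤ k := by exact_mod_cast hk
  have h := (f_bounds k hk).1
  have h3 := Real.log_three_gt_d9
  have h1 : Real.log k ≤ Real.log (2.5 * k) := Real.log_le_log (by linarith) (by linarith)
  have h0 : 0 ≤ Real.log k := Real.log_nonneg (by linarith)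
  have h2 : Real.log k ≤ Real.log ((3 : ℝ) ^ f k) := by
    rw [Real.log_pow]
    nlinarith [Nat.cast_nonneg (α := ℝ) (f k)]
  have := (Real.log_le_log_iff (by linarith) (by positivity)).1 h2
  exact_mod_cast this

theorem concl_main (k F : ℕ) (hk : 5 ≤ k) (hF : f k = F) (hFk : F ≤ k)
    (hpi : k + F ≤ Nat.primeCounting ((F + 1) * (k - F)) + 3) :
    |(Real.logb 10 (nthPrime (f k + k - 3)))^2 - Real.logb 10 (nthPrime (f k + k - 3))| <
      ((k : ℝ) + 1) * ((f k : ℝ) + 1) - (nthPrime (f k + k - 3) : ℝ) := by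
  have h3 := k_le_three_pow k hk
  apply concl k (F + 1) ((F + 1) * (k - F)) (by omega)
  · have h2 : F + 1 ≤ 2 ^ F := Nat.lt_two_pow_self
    rw [hF] at h3
    calc (F + 1) * (k - F) ≤ 2 ^ F * 3 ^ F := Nat.mul_le_mul h2 (by omega)
      _ = 6 ^ F := by rw [← mul_pow]; norm_num
      _ ≤ 10 ^ F := Nat.pow_le_pow_left (by norm_num) _
      _ < 10 ^ (F + 1) := Nat.pow_lt_pow_right (by norm_num) (by omega)
  · rw [hF]
    obtain ⟨j, rfl⟩ := Nat.exists_eq_add_of_le hFk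
    rw [Nat.add_sub_cancel_left]
    apply le_of_eq
    ring
  · omega
  · omega

theorem core (A X η ε ℓ : ℝ) (k F : ℕ) (hFk : F < k) (hA : 0 ≤ A) (hX : 2 ≤ X) (hη : η ≤ 1)
    (h : ∀ t, X ≤ t → A * t ≤ Chebyshev.theta t)
    (hy : X ≤ η * (((F : ℝ) + 1) * ((k : ℝ) - F)))
    (hℓ : Real.log (((F : ℝ) + 1) * ((k : ℝ) - F)) ≤ ℓ)
    (hmain : (1 + ε) * ℓ ^ 2 ≤ A * ((F : ℝ) + 1) * (ℓ + 1 - η))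
    (hε : (k : ℝ) + F - 3 ≤ (1 + ε) * ((k : ℝ) - F)) :
    k + F ≤ Nat.primeCounting ((F + 1) * (k - F)) + 3 := by
  have hkF : (0 : ℝ) < (k : ℝ) - F := by
    have : (F : ℝ) < k := by exact_mod_cast hFk
    linarith
  set y : ℝ := ((F : ℝ) + 1) * ((k : ℝ) - F) with hydef
  have hy0 : 0 < y := by positivity
  have hXy : X ≤ y := by nlinarith
  have hp := pi_lower A X y hA hX hXy h
  have ey : ⌊y⌋₊ = (F + 1) * (k - F) := by
    have : y = (((F + 1) * (k - F) : ℕ) : ℝ) := by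
      rw [Nat.cast_mul, Nat.cast_sub hFk.le]; push_cast; rfl
    rw [this, Nat.floor_natCast]
  rw [ey] at hp
  set L := Real.log y
  have hL : 0 < L := Real.log_pos (by linarith)
  have hℓ0 : 0 < ℓ := by linarith
  have a1 : A * (y * ((L + 1 - η) / L ^ 2)) ≤ A * (y / L + (y - X) / L ^ 2) := by
    apply mul_le_mul_of_nonneg_left _ hA
    have : y / L + (y - X) / L ^ 2 = (y * L + (y - X)) / L ^ 2 := by field_simp
    rw [this, ← mul_div_assoc]
    apply div_le_div_of_nonneg_right _ (by positivity)
    nlinarith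
  have a2 : (ℓ + 1 - η) / ℓ ^ 2 ≤ (L + 1 - η) / L ^ 2 := by
    rw [div_le_div_iff₀ (by positivity) (by positivity)]
    have : 0 ≤ 1 - η := by linarith
    have e1 : L * L ≤ ℓ * ℓ := by nlinarith
    have e2 : 0 ≤ L * ℓ * (ℓ - L) := by
      apply mul_nonneg (by positivity); linarith
    nlinarith
  have a3 : 1 + ε ≤ A * ((F : ℝ) + 1) * ((ℓ + 1 - η) / ℓ ^ 2) := by
    rw [← mul_div_assoc, le_div_iff₀ (by positivity)]
    exact hmain
  have a4 : A * (y * ((ℓ + 1 - η) / ℓ ^ 2)) ≤ A * (y * ((L + 1 - η) / L ^ 2)) := by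
    gcongr
  have a5 : (1 + ε) * ((k : ℝ) - F) ≤ A * (y * ((ℓ + 1 - η) / ℓ ^ 2)) := by
    have := mul_le_mul_of_nonneg_right a3 hkF.le
    calc _ ≤ _ := this
      _ = _ := by rw [hydef]; ring
  have : ((k : ℝ) + F) ≤ (Nat.primeCounting ((F + 1) * (k - F)) : ℝ) + 3 := by linarith
  exact_mod_cast this

theorem log_y_le (k F : ℕ) (T : ℝ) (hT : 0 < T) (hF : 1.1 * Real.log (2.5 * k) ≤ (F : ℝ))
    (hFk : F < k) :
    Real.log (((F : ℝ) + 1) * ((k : ℝ) - F)) ≤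
      F * (10 / 11) - (Real.log 5 - Real.log 2) + (Real.log T + ((F : ℝ) + 1) / T - 1) := by
  have hFk' : (F : ℝ) < k := by exact_mod_cast hFk
  have hF0 : (0 : ℝ) ≤ F := Nat.cast_nonneg F
  have hk0 : (0 : ℝ) < k := by linarith
  rw [Real.log_mul (by linarith) (by linarith)]
  have h1 : Real.log ((k : ℝ) - F) ≤ Real.log k := Real.log_le_log (by linarith) (by linarith)
  have h2 : Real.log (((F : ℝ) + 1) / T) ≤ ((F : ℝ) + 1) / T - 1 :=
    Real.log_le_sub_one_of_pos (by positivity)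
  rw [Real.log_div (by linarith) hT.ne'] at h2
  have h3 : Real.log (2.5 * (k : ℝ)) = Real.log 5 - Real.log 2 + Real.log k := by
    rw [Real.log_mul (by norm_num) hk0.ne', show (2.5 : ℝ) = 5 / 2 by norm_num,
      Real.log_div (by norm_num) (by norm_num)]
  rw [h3] at hF
  norm_num at hF
  linarith

theorem tier1 (k : ℕ) (h1 : 55000 ≤ k) (h2 : k < 2100000) :
    k + f k ≤ Nat.primeCounting ((f k + 1) * (k - f k)) + 3 := by
  obtain ⟨fl, fu⟩ := f_bounds k (by omega)
  have l2 := Real.log_two_lt_d9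
  have l2' := Real.log_two_gt_d9
  have l3 := Real.log_three_lt_d9
  have l3' := Real.log_three_gt_d9
  have l5 := Real.log_five_lt_d9
  have l5' := Real.log_five_gt_d9
  have h1' : (55000 : ℝ) ≤ k := by exact_mod_cast h1
  have h2' : (k : ℝ) < 2100000 := by exact_mod_cast h2
  have b1 : 7 * Real.log 3 + 3 * Real.log 5 - Real.log 2 ≤ Real.log (2.5 * k) := by
    have : Real.log (3 ^ 7 * 5 ^ 3 / 2) ≤ Real.log (2.5 * k) :=
      Real.log_le_log (by norm_num) (by norm_num; linarith)
    rw [Real.log_div (by norm_num) (by norm_num), Real.log_mul (by norm_num) (by norm_num),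
      Real.log_pow, Real.log_pow] at this
    push_cast at this
    linarith
  have b2 : Real.log (2.5 * k) ≤ 6 * Real.log 2 + 3 * Real.log 3 + 5 * Real.log 5 := by
    have : Real.log (2.5 * k) ≤ Real.log (2 ^ 6 * 3 ^ 3 * 5 ^ 5) :=
      Real.log_le_log (by linarith) (by norm_num; linarith)
    rw [Real.log_mul (x := 2 ^ 6 * 3 ^ 3) (by norm_num) (by norm_num),
      Real.log_mul (x := 2 ^ 6) (by norm_num) (by norm_num),
      Real.log_pow, Real.log_pow, Real.log_pow] at this
    push_cast at this
    linarith
  have F1 : 14 ≤ f k := by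
    have : (13 : ℝ) < f k := by linarith
    have : 13 < f k := by exact_mod_cast this
    omega
  have F2 : f k ≤ 18 := by
    have : (f k : ℝ) < 19 := by linarith
    have : f k < 19 := by exact_mod_cast this
    omega
  generalize f k = F at *
  have F1' : (14 : ℝ) ≤ F := by exact_mod_cast F1
  have F2' : (F : ℝ) ≤ 18 := by exact_mod_cast F2
  have hlog := log_y_le k F 17 (by norm_num) fl (by omega)
  have l17 : 2 * Real.log 17 ≤ 5 * Real.log 2 + 2 * Real.log 3 + 1 / 288 := by
    have : Real.log (17 ^ 2 / (2 ^ 5 * 3 ^ 2)) ≤ 17 ^ 2 / (2 ^ 5 * 3 ^ 2) - 1 :=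
      Real.log_le_sub_one_of_pos (by norm_num)
    rw [Real.log_div (by norm_num) (by norm_num), Real.log_mul (by norm_num) (by norm_num),
      Real.log_pow, Real.log_pow, Real.log_pow] at this
    push_cast at this
    norm_num at this ⊢
    linarith
  apply core 0.9267 100000 0.122 0.00064 (F * (10 / 11) + F / 17 + 0.976) k F (by omega) (by norm_num)
    (by norm_num) (by norm_num) theta_tier1
  · nlinarith
  · linarith
  · interval_cases F <;> norm_num
  · linarith

theorem tier2 (k : ℕ) (h1 : 2100000 ≤ k) :
    f k < k ∧ k + f k ≤ Nat.primeCounting ((f k + 1) * (k - f k)) + 3 := by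
  obtain ⟨fl, fu⟩ := f_bounds k (by omega)
  have l2 := Real.log_two_lt_d9
  have l2' := Real.log_two_gt_d9
  have l3 := Real.log_three_lt_d9
  have l3' := Real.log_three_gt_d9
  have l5 := Real.log_five_lt_d9
  have l5' := Real.log_five_gt_d9
  have h1' : (2100000 : ℝ) ≤ k := by exact_mod_cast h1
  have b1 : 9 * Real.log 2 + 4 * Real.log 3 + 3 * Real.log 5 ≤ Real.log (2.5 * k) := by
    have : Real.log (2 ^ 9 * 3 ^ 4 * 5 ^ 3) ≤ Real.log (2.5 * k) :=
      Real.log_le_log (by norm_num) (by norm_num; linarith)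
    rw [Real.log_mul (by norm_num) (by norm_num), Real.log_mul (by norm_num) (by norm_num),
      Real.log_pow, Real.log_pow, Real.log_pow] at this
    push_cast at this
    linarith
  have b2 : Real.log (2.5 * k) ≤ 6 * Real.log 2 + 3 * Real.log 3 + 5 * Real.log 5
      + (2.5 * k / 5400000 - 1) := by
    have : Real.log (2.5 * k / (2 ^ 6 * 3 ^ 3 * 5 ^ 5)) ≤ 2.5 * k / (2 ^ 6 * 3 ^ 3 * 5 ^ 5) - 1 :=
      Real.log_le_sub_one_of_pos (by positivity)
    rw [Real.log_div (by positivity) (by norm_num),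
      Real.log_mul (x := 2 ^ 6 * 3 ^ 3) (by norm_num) (by norm_num),
      Real.log_mul (x := 2 ^ 6) (by norm_num) (by norm_num),
      Real.log_pow, Real.log_pow, Real.log_pow] at this
    push_cast at this
    norm_num at this ⊢
    linarith
  have F1 : 18 ≤ f k := by
    have : (17 : ℝ) < f k := by linarith
    have : 17 < f k := by exact_mod_cast this
    omega
  generalize f k = F at *
  have F1' : (18 : ℝ) ≤ F := by exact_mod_cast F1
  have F2' : (F : ℝ) ≤ 17 + 0.000001 * k := by linarith
  have hFk : F < k := by
    have : (F : ℝ) < k := by linarith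
    exact_mod_cast this
  refine ⟨hFk, ?_⟩
  have hlog := log_y_le k F 40 (by norm_num) fl hFk
  have l40 : Real.log 40 = 3 * Real.log 2 + Real.log 5 := by
    rw [show (40 : ℝ) = 2 ^ 3 * 5 by norm_num, Real.log_mul (by norm_num) (by norm_num),
      Real.log_pow]
    norm_num
  apply core 0.9385 4000000 0.101 0.00003 (F * (10 / 11) + F / 40 + 1.798) k F hFk (by norm_num)
    (by norm_num) (by norm_num) theta_tier2
  · nlinarith
  · linarith
  · obtain ⟨g, hg⟩ : ∃ g : ℝ, g = F - 18 := ⟨_, rfl⟩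
    have hg0 : 0 ≤ g := by linarith
    have : (F : ℝ) = g + 18 := by linarith
    rw [this]
    nlinarith [mul_nonneg hg0 hg0]
  · linarith


/-! ### Part 4: the finite range, by counting primes explicitly -/

/-- Lower bound on the number of primes in `(6 lo, 6 (lo + len)]`: count the numbers congruent to
`1` or `5` modulo `6` that are coprime to `Q` (by binary splitting of depth `d`). -/
def cnt (Q : ℕ) : ℕ → ℕ → ℕ → ℕ
  | 0, lo, len => cond (Nat.beq len 0) 0
      ((Nat.beq (Nat.gcd (6 * lo + 1) Q) 1).toNat + (Nat.beq (Nat.gcd (6 * lo + 5) Q) 1).toNat)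
  | d + 1, lo, len => cnt Q d lo (len / 2) + cnt Q d (lo + len / 2) (len - len / 2)

theorem prime_of_gcd (Q B n : ℕ) (hQ : ∀ p < B, 1 < p → Nat.gcd p Q ≠ 1) (h1 : 1 < n)
    (hn : n < B * B) (hg : Nat.gcd n Q = 1) : n.Prime := by
  by_contra hnp
  have hm := Nat.minFac_sq_le_self (by omega) hnp
  have hp := Nat.minFac_prime (n := n) (by omega)
  have hlt : n.minFac < B := by
    by_contra h
    push Not at h
    nlinarith
  apply hQ _ hlt hp.one_lt
  exact Nat.Coprime.coprime_dvd_left (Nat.minFac_dvd n) hg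

theorem primeCounting_step (n : ℕ) (b : Bool) (h : b = true → (n + 1).Prime) :
    Nat.primeCounting n + b.toNat ≤ Nat.primeCounting (n + 1) := by
  cases b with
  | false => exact Nat.monotone_primeCounting (Nat.le_succ n)
  | true =>
    have hp := h rfl
    apply le_of_eq
    rw [Nat.primeCounting, Nat.primeCounting', Nat.primeCounting, Nat.primeCounting',
      Nat.count_succ _ (n + 1), if_pos hp]
    rfl

theorem cnt_le (Q B : ℕ) (hQ : ∀ p < B, 1 < p → Nat.gcd p Q ≠ 1) (d : ℕ) :
    ∀ lo len, 1 ≤ lo → 6 * (lo + len) ≤ B * B →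
      Nat.primeCounting (6 * lo) + cnt Q d lo len ≤ Nat.primeCounting (6 * (lo + len)) := by
  induction d with
  | zero =>
    intro lo len h1 hB
    rcases Nat.eq_zero_or_pos len with h0 | h0
    · subst h0
      simp [cnt]
    · have e : Nat.beq len 0 = false := by
        cases len with
        | zero => omega
        | succ l => rfl
      simp only [cnt, e, cond_false]
      have s1 := primeCounting_step (6 * lo) (Nat.beq (Nat.gcd (6 * lo + 1) Q) 1) (fun h =>
        prime_of_gcd Q B _ hQ (by omega) (by omega) (Nat.eq_of_beq_eq_true h))
      have s2 := primeCounting_step (6 * lo + 4) (Nat.beq (Nat.gcd (6 * lo + 5) Q) 1) (fun h =>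
        prime_of_gcd Q B _ hQ (by omega) (by omega) (Nat.eq_of_beq_eq_true h))
      have m1 : Nat.primeCounting (6 * lo + 1) ≤ Nat.primeCounting (6 * lo + 4) :=
        Nat.monotone_primeCounting (by omega)
      have m2 : Nat.primeCounting (6 * lo + 4 + 1) ≤ Nat.primeCounting (6 * (lo + len)) :=
        Nat.monotone_primeCounting (by omega)
      omega
  | succ d ih =>
    intro lo len h1 hB
    have i1 := ih lo (len / 2) h1 (by omega)
    have i2 := ih (lo + len / 2) (len - len / 2) (by omega) (by omega)
    rw [show lo + len / 2 + (len - len / 2) = lo + len by omega] at i2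
    simp only [cnt]
    omega

/-- The product of the primes below `31`. -/
def qSmall : ℕ := 6469693230

/-- The product of the primes below `883`. -/
def qBig : ℕ :=
  50011062646709255026480560336816770025267796775510470604240969507289202411421135655738262384107924862828310535685261583166269225097868733609495641282895693186065719998497720739860275986482068486749740241451135324944531456305824821893567948723208019971628166797655952179215678778969978120600439456164856501872754619649012101292731668054406756492786635753811790313465910

theorem qSmall_spec : ∀ p < 31, 1 < p → Nat.gcd p qSmall ≠ 1 := by decide +kernel

theorem qBig_spec : ∀ p < 883, 1 < p → Nat.gcd p qBig ≠ 1 := by decide +kernel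

theorem stepSmall (d m c m' c' : ℕ) (h : c ≤ Nat.primeCounting (6 * m))
    (hd : (Nat.ble 1 m && Nat.ble m m' && Nat.ble m' 160 &&
      Nat.ble c' (c + cnt qSmall d m (m' - m))) = true) : c' ≤ Nat.primeCounting (6 * m') := by
  simp only [Bool.and_eq_true, Nat.ble_eq] at hd
  obtain ⟨⟨⟨h1, h2⟩, h3⟩, h4⟩ := hd
  have := cnt_le qSmall 31 qSmall_spec d m (m' - m) h1 (by omega)
  rw [show m + (m' - m) = m' by omega] at this
  omega

theorem stepBig (d m c m' c' : ℕ) (h : c ≤ Nat.primeCounting (6 * m))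
    (hd : (Nat.ble 1 m && Nat.ble m m' && Nat.ble m' 129948 &&
      Nat.ble c' (c + cnt qBig d m (m' - m))) = true) : c' ≤ Nat.primeCounting (6 * m') := by
  simp only [Bool.and_eq_true, Nat.ble_eq] at hd
  obtain ⟨⟨⟨h1, h2⟩, h3⟩, h4⟩ := hd
  have := cnt_le qBig 883 qBig_spec d m (m' - m) h1 (by omega)
  rw [show m + (m' - m) = m' by omega] at this
  omega

theorem f_ge (a F k : ℕ) (ha : 5 ≤ a) (hk : a ≤ k)
    (h : (2.7182818286 : ℝ) ^ (10 * F) < (2.5 * a) ^ 11) : F + 1 ≤ f k := by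
  have ha' : (5 : ℝ) ≤ a := by exact_mod_cast ha
  have hk' : (a : ℝ) ≤ k := by exact_mod_cast hk
  have h1 : Real.exp (10 * F : ℕ) < (2.5 * k) ^ 11 := by
    rw [← Real.exp_one_pow]
    calc Real.exp 1 ^ (10 * F) ≤ (2.7182818286 : ℝ) ^ (10 * F) := by
          gcongr
          exact Real.exp_one_lt_d9.le
      _ < _ := h
      _ ≤ _ := by gcongr
  have h2 := (Real.lt_log_iff_exp_lt (pow_pos (by linarith) 11)).2 h1
  rw [Real.log_pow] at h2
  push_cast at h2
  have h3 := (f_bounds k (by omega)).1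
  have : (F : ℝ) < f k := by
    norm_num at h3 h2
    linarith
  exact_mod_cast this

theorem f_le (b F k : ℕ) (hk5 : 5 ≤ k) (hk : k ≤ b)
    (h : (2.5 * b) ^ 11 ≤ (2.7182818283 : ℝ) ^ (10 * F)) : f k ≤ F := by
  have ha' : (5 : ℝ) ≤ k := by exact_mod_cast hk5
  have hk' : (k : ℝ) ≤ b := by exact_mod_cast hk
  have h1 : (2.5 * (k : ℝ)) ^ 11 ≤ Real.exp (10 * F : ℕ) := by
    rw [← Real.exp_one_pow]
    calc (2.5 * (k : ℝ)) ^ 11 ≤ (2.5 * (b : ℝ)) ^ 11 := by gcongr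
      _ ≤ _ := h
      _ ≤ _ := by
        gcongr
        exact Real.exp_one_gt_d9.le
  have h2 := (Real.log_le_iff_le_exp (pow_pos (by linarith) 11)).2 h1
  rw [Real.log_pow] at h2
  push_cast at h2
  have h3 := (f_bounds k hk5).2
  have : (f k : ℝ) < F + 1 := by
    norm_num at h3 h2
    linarith
  have : f k < F + 1 := by exact_mod_cast this
  omega

theorem seg {m c : ℕ} (hc : c ≤ Nat.primeCounting (6 * m)) (a b F : ℕ)
    (hd : (Nat.ble (6 * m) ((F + 1) * (a - F)) && Nat.ble (b + F) (c + 3) && Nat.ble F a &&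
      Nat.ble 5 a) = true) (k : ℕ) (hf : f k = F) (hak : a ≤ k) (hkb : k ≤ b) :
    |(Real.logb 10 (nthPrime (f k + k - 3)))^2 - Real.logb 10 (nthPrime (f k + k - 3))| <
      ((k : ℝ) + 1) * ((f k : ℝ) + 1) - (nthPrime (f k + k - 3) : ℝ) := by
  simp only [Bool.and_eq_true, Nat.ble_eq] at hd
  obtain ⟨⟨⟨h1, h2⟩, h3⟩, h4⟩ := hd
  apply concl_main k F (by omega) hf (by omega)
  have : (F + 1) * (a - F) ≤ (F + 1) * (k - F) := Nat.mul_le_mul_left _ (by omega)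
  have := Nat.monotone_primeCounting (show 6 * m ≤ (F + 1) * (k - F) by omega)
  omega

theorem pc0 : 10 ≤ Nat.primeCounting (6 * 5) := by decide +kernel

theorem pc1 : 18 ≤ Nat.primeCounting (6 * 11) :=
  stepSmall 3 5 10 11 18 pc0 (by decide +kernel)

theorem pc2 : 20 ≤ Nat.primeCounting (6 * 12) :=
  stepSmall 0 11 18 12 20 pc1 (by decide +kernel)

theorem pc3 : 23 ≤ Nat.primeCounting (6 * 14) :=
  stepSmall 1 12 20 14 23 pc2 (by decide +kernel)

theorem pc4 : 26 ≤ Nat.primeCounting (6 * 17) :=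
  stepSmall 2 14 23 17 26 pc3 (by decide +kernel)

theorem pc5 : 30 ≤ Nat.primeCounting (6 * 20) :=
  stepSmall 2 17 26 20 30 pc4 (by decide +kernel)

theorem pc6 : 34 ≤ Nat.primeCounting (6 * 24) :=
  stepSmall 2 20 30 24 34 pc5 (by decide +kernel)

theorem pc7 : 39 ≤ Nat.primeCounting (6 * 28) :=
  stepSmall 2 24 34 28 39 pc6 (by decide +kernel)

theorem pc8 : 47 ≤ Nat.primeCounting (6 * 37) :=
  stepSmall 4 28 39 37 47 pc7 (by decide +kernel)

theorem pc9 : 57 ≤ Nat.primeCounting (6 * 45) :=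
  stepSmall 3 37 47 45 57 pc8 (by decide +kernel)

theorem pc10 : 68 ≤ Nat.primeCounting (6 * 57) :=
  stepSmall 4 45 57 57 68 pc9 (by decide +kernel)

theorem pc11 : 81 ≤ Nat.primeCounting (6 * 70) :=
  stepSmall 4 57 68 70 81 pc10 (by decide +kernel)

theorem pc12 : 97 ≤ Nat.primeCounting (6 * 85) :=
  stepSmall 4 70 81 85 97 pc11 (by decide +kernel)

theorem pc13 : 125 ≤ Nat.primeCounting (6 * 116) :=
  stepSmall 5 85 97 116 125 pc12 (by decide +kernel)

theorem pc14 : 156 ≤ Nat.primeCounting (6 * 153) :=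
  stepSmall 6 116 125 153 156 pc13 (by decide +kernel)

theorem pc15 : 192 ≤ Nat.primeCounting (6 * 194) :=
  stepBig 6 153 156 194 192 pc14 (by decide +kernel)

theorem pc16 : 230 ≤ Nat.primeCounting (6 * 242) :=
  stepBig 6 194 192 242 230 pc15 (by decide +kernel)

theorem pc17 : 273 ≤ Nat.primeCounting (6 * 293) :=
  stepBig 6 242 230 293 273 pc16 (by decide +kernel)

theorem pc18 : 306 ≤ Nat.primeCounting (6 * 337) :=
  stepBig 6 293 273 337 306 pc17 (by decide +kernel)

theorem pc19 : 382 ≤ Nat.primeCounting (6 * 441) :=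
  stepBig 7 337 306 441 382 pc18 (by decide +kernel)

theorem pc20 : 469 ≤ Nat.primeCounting (6 * 555) :=
  stepBig 7 441 382 555 469 pc19 (by decide +kernel)

theorem pc21 : 565 ≤ Nat.primeCounting (6 * 685) :=
  stepBig 8 555 469 685 565 pc20 (by decide +kernel)

theorem pc22 : 666 ≤ Nat.primeCounting (6 * 829) :=
  stepBig 8 685 565 829 666 pc21 (by decide +kernel)

theorem pc23 : 747 ≤ Nat.primeCounting (6 * 946) :=
  stepBig 7 829 666 946 747 pc22 (by decide +kernel)

theorem pc24 : 933 ≤ Nat.primeCounting (6 * 1221) :=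
  stepBig 9 946 747 1221 933 pc23 (by decide +kernel)

theorem pc25 : 1138 ≤ Nat.primeCounting (6 * 1531) :=
  stepBig 9 1221 933 1531 1138 pc24 (by decide +kernel)

theorem pc26 : 1357 ≤ Nat.primeCounting (6 * 1873) :=
  stepBig 9 1531 1138 1873 1357 pc25 (by decide +kernel)

theorem pc27 : 1592 ≤ Nat.primeCounting (6 * 2238) :=
  stepBig 9 1873 1357 2238 1592 pc26 (by decide +kernel)

theorem pc28 : 1822 ≤ Nat.primeCounting (6 * 2605) :=
  stepBig 9 2238 1592 2605 1822 pc27 (by decide +kernel)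

theorem pc29 : 2247 ≤ Nat.primeCounting (6 * 3311) :=
  stepBig 10 2605 1822 3311 2247 pc28 (by decide +kernel)

theorem pc30 : 2722 ≤ Nat.primeCounting (6 * 4090) :=
  stepBig 10 3311 2247 4090 2722 pc29 (by decide +kernel)

theorem pc31 : 3227 ≤ Nat.primeCounting (6 * 4961) :=
  stepBig 10 4090 2722 4961 3227 pc30 (by decide +kernel)

theorem pc32 : 3761 ≤ Nat.primeCounting (6 * 5886) :=
  stepBig 10 4961 3227 5886 3761 pc31 (by decide +kernel)

theorem pc33 : 4443 ≤ Nat.primeCounting (6 * 7078) :=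
  stepBig 11 5886 3761 7078 4443 pc32 (by decide +kernel)

theorem pc34 : 5417 ≤ Nat.primeCounting (6 * 8850) :=
  stepBig 11 7078 4443 8850 5417 pc33 (by decide +kernel)

theorem pc35 : 6476 ≤ Nat.primeCounting (6 * 10798) :=
  stepBig 11 8850 5417 10798 6476 pc34 (by decide +kernel)

theorem pc36 : 7613 ≤ Nat.primeCounting (6 * 12916) :=
  stepBig 12 10798 6476 12916 7613 pc35 (by decide +kernel)

theorem pc37 : 8813 ≤ Nat.primeCounting (6 * 15190) :=
  stepBig 12 12916 7613 15190 8813 pc36 (by decide +kernel)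

theorem pc38 : 10070 ≤ Nat.primeCounting (6 * 17590) :=
  stepBig 12 15190 8813 17590 10070 pc37 (by decide +kernel)

theorem pc39 : 10822 ≤ Nat.primeCounting (6 * 19064) :=
  stepBig 11 17590 10070 19064 10822 pc38 (by decide +kernel)

theorem pc40 : 13046 ≤ Nat.primeCounting (6 * 23404) :=
  stepBig 13 19064 10822 23404 13046 pc39 (by decide +kernel)

theorem pc41 : 15440 ≤ Nat.primeCounting (6 * 28223) :=
  stepBig 13 23404 13046 28223 15440 pc40 (by decide +kernel)

theorem pc42 : 18022 ≤ Nat.primeCounting (6 * 33410) :=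
  stepBig 13 28223 15440 33410 18022 pc41 (by decide +kernel)

theorem pc43 : 20747 ≤ Nat.primeCounting (6 * 39004) :=
  stepBig 13 33410 18022 39004 20747 pc42 (by decide +kernel)

theorem pc44 : 23604 ≤ Nat.primeCounting (6 * 44908) :=
  stepBig 13 39004 20747 44908 23604 pc43 (by decide +kernel)

theorem pc45 : 26488 ≤ Nat.primeCounting (6 * 50997) :=
  stepBig 13 44908 23604 50997 26488 pc44 (by decide +kernel)

theorem pc46 : 31561 ≤ Nat.primeCounting (6 * 61754) :=
  stepBig 14 50997 26488 61754 31561 pc45 (by decide +kernel)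

theorem pc47 : 37060 ≤ Nat.primeCounting (6 * 73591) :=
  stepBig 14 61754 31561 73591 37060 pc46 (by decide +kernel)

theorem pc48 : 42948 ≤ Nat.primeCounting (6 * 86422) :=
  stepBig 14 73591 37060 86422 42948 pc47 (by decide +kernel)

theorem pc49 : 49170 ≤ Nat.primeCounting (6 * 100160) :=
  stepBig 14 86422 42948 100160 49170 pc48 (by decide +kernel)

theorem pc50 : 55668 ≤ Nat.primeCounting (6 * 114678) :=
  stepBig 14 100160 49170 114678 55668 pc49 (by decide +kernel)

theorem pc51 : 62444 ≤ Nat.primeCounting (6 * 129948) :=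
  stepBig 14 114678 55668 129948 62444 pc50 (by decide +kernel)

theorem range5 (k : ℕ) (h1 : 16 ≤ k) (h2 : k ≤ 37) :
    |(Real.logb 10 (nthPrime (f k + k - 3)))^2 - Real.logb 10 (nthPrime (f k + k - 3))| <
      ((k : ℝ) + 1) * ((f k : ℝ) + 1) - (nthPrime (f k + k - 3) : ℝ) := by
  have hf : f k = 5 := by
    have g1 := f_ge 16 4 k (by norm_num) h1 (by norm_num)
    have g2 := f_le 37 5 k (by omega) h2 (by norm_num)
    omega
  rcases le_or_gt k 16 with h | h1
  · exact seg pc1 16 16 5 (by decide +kernel) k hf h1 h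
  rcases le_or_gt k 18 with h | h1
  · exact seg pc2 17 18 5 (by decide +kernel) k hf h1 h
  rcases le_or_gt k 21 with h | h1
  · exact seg pc3 19 21 5 (by decide +kernel) k hf h1 h
  rcases le_or_gt k 24 with h | h1
  · exact seg pc4 22 24 5 (by decide +kernel) k hf h1 h
  rcases le_or_gt k 28 with h | h1
  · exact seg pc5 25 28 5 (by decide +kernel) k hf h1 h
  rcases le_or_gt k 32 with h | h1
  · exact seg pc6 29 32 5 (by decide +kernel) k hf h1 h
  exact seg pc7 33 37 5 (by decide +kernel) k hf h1 h2

theorem range6 (k : ℕ) (h1 : 38 ≤ k) (h2 : k ≤ 93) :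
    |(Real.logb 10 (nthPrime (f k + k - 3)))^2 - Real.logb 10 (nthPrime (f k + k - 3))| <
      ((k : ℝ) + 1) * ((f k : ℝ) + 1) - (nthPrime (f k + k - 3) : ℝ) := by
  have hf : f k = 6 := by
    have g1 := f_ge 38 5 k (by norm_num) h1 (by norm_num)
    have g2 := f_le 93 6 k (by omega) h2 (by norm_num)
    omega
  rcases le_or_gt k 44 with h | h1
  · exact seg pc8 38 44 6 (by decide +kernel) k hf h1 h
  rcases le_or_gt k 54 with h | h1
  · exact seg pc9 45 54 6 (by decide +kernel) k hf h1 h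
  rcases le_or_gt k 65 with h | h1
  · exact seg pc10 55 65 6 (by decide +kernel) k hf h1 h
  rcases le_or_gt k 78 with h | h1
  · exact seg pc11 66 78 6 (by decide +kernel) k hf h1 h
  exact seg pc12 79 93 6 (by decide +kernel) k hf h1 h2

theorem range7 (k : ℕ) (h1 : 94 ≤ k) (h2 : k ≤ 232) :
    |(Real.logb 10 (nthPrime (f k + k - 3)))^2 - Real.logb 10 (nthPrime (f k + k - 3))| <
      ((k : ℝ) + 1) * ((f k : ℝ) + 1) - (nthPrime (f k + k - 3) : ℝ) := by
  have hf : f k = 7 := by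
    have g1 := f_ge 94 6 k (by norm_num) h1 (by norm_num)
    have g2 := f_le 232 7 k (by omega) h2 (by norm_num)
    omega
  rcases le_or_gt k 121 with h | h1
  · exact seg pc13 94 121 7 (by decide +kernel) k hf h1 h
  rcases le_or_gt k 152 with h | h1
  · exact seg pc14 122 152 7 (by decide +kernel) k hf h1 h
  rcases le_or_gt k 188 with h | h1
  · exact seg pc15 153 188 7 (by decide +kernel) k hf h1 h
  rcases le_or_gt k 226 with h | h1
  · exact seg pc16 189 226 7 (by decide +kernel) k hf h1 h
  exact seg pc17 227 232 7 (by decide +kernel) k hf h1 h2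

theorem range8 (k : ℕ) (h1 : 233 ≤ k) (h2 : k ≤ 576) :
    |(Real.logb 10 (nthPrime (f k + k - 3)))^2 - Real.logb 10 (nthPrime (f k + k - 3))| <
      ((k : ℝ) + 1) * ((f k : ℝ) + 1) - (nthPrime (f k + k - 3) : ℝ) := by
  have hf : f k = 8 := by
    have g1 := f_ge 233 7 k (by norm_num) h1 (by norm_num)
    have g2 := f_le 576 8 k (by omega) h2 (by norm_num)
    omega
  rcases le_or_gt k 301 with h | h1
  · exact seg pc18 233 301 8 (by decide +kernel) k hf h1 h
  rcases le_or_gt k 377 with h | h1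
  · exact seg pc19 302 377 8 (by decide +kernel) k hf h1 h
  rcases le_or_gt k 464 with h | h1
  · exact seg pc20 378 464 8 (by decide +kernel) k hf h1 h
  rcases le_or_gt k 560 with h | h1
  · exact seg pc21 465 560 8 (by decide +kernel) k hf h1 h
  exact seg pc22 561 576 8 (by decide +kernel) k hf h1 h2

theorem range9 (k : ℕ) (h1 : 577 ≤ k) (h2 : k ≤ 1430) :
    |(Real.logb 10 (nthPrime (f k + k - 3)))^2 - Real.logb 10 (nthPrime (f k + k - 3))| <
      ((k : ℝ) + 1) * ((f k : ℝ) + 1) - (nthPrime (f k + k - 3) : ℝ) := by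
  have hf : f k = 9 := by
    have g1 := f_ge 577 8 k (by norm_num) h1 (by norm_num)
    have g2 := f_le 1430 9 k (by omega) h2 (by norm_num)
    omega
  rcases le_or_gt k 741 with h | h1
  · exact seg pc23 577 741 9 (by decide +kernel) k hf h1 h
  rcases le_or_gt k 927 with h | h1
  · exact seg pc24 742 927 9 (by decide +kernel) k hf h1 h
  rcases le_or_gt k 1132 with h | h1
  · exact seg pc25 928 1132 9 (by decide +kernel) k hf h1 h
  rcases le_or_gt k 1351 with h | h1
  · exact seg pc26 1133 1351 9 (by decide +kernel) k hf h1 h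
  exact seg pc27 1352 1430 9 (by decide +kernel) k hf h1 h2

theorem range10 (k : ℕ) (h1 : 1431 ≤ k) (h2 : k ≤ 3549) :
    |(Real.logb 10 (nthPrime (f k + k - 3)))^2 - Real.logb 10 (nthPrime (f k + k - 3))| <
      ((k : ℝ) + 1) * ((f k : ℝ) + 1) - (nthPrime (f k + k - 3) : ℝ) := by
  have hf : f k = 10 := by
    have g1 := f_ge 1431 9 k (by norm_num) h1 (by norm_num)
    have g2 := f_le 3549 10 k (by omega) h2 (by norm_num)
    omega
  rcases le_or_gt k 1815 with h | h1
  · exact seg pc28 1431 1815 10 (by decide +kernel) k hf h1 h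
  rcases le_or_gt k 2240 with h | h1
  · exact seg pc29 1816 2240 10 (by decide +kernel) k hf h1 h
  rcases le_or_gt k 2715 with h | h1
  · exact seg pc30 2241 2715 10 (by decide +kernel) k hf h1 h
  rcases le_or_gt k 3220 with h | h1
  · exact seg pc31 2716 3220 10 (by decide +kernel) k hf h1 h
  exact seg pc32 3221 3549 10 (by decide +kernel) k hf h1 h2

theorem range11 (k : ℕ) (h1 : 3550 ≤ k) (h2 : k ≤ 8810) :
    |(Real.logb 10 (nthPrime (f k + k - 3)))^2 - Real.logb 10 (nthPrime (f k + k - 3))| <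
      ((k : ℝ) + 1) * ((f k : ℝ) + 1) - (nthPrime (f k + k - 3) : ℝ) := by
  have hf : f k = 11 := by
    have g1 := f_ge 3550 10 k (by norm_num) h1 (by norm_num)
    have g2 := f_le 8810 11 k (by omega) h2 (by norm_num)
    omega
  rcases le_or_gt k 4435 with h | h1
  · exact seg pc33 3550 4435 11 (by decide +kernel) k hf h1 h
  rcases le_or_gt k 5409 with h | h1
  · exact seg pc34 4436 5409 11 (by decide +kernel) k hf h1 h
  rcases le_or_gt k 6468 with h | h1
  · exact seg pc35 5410 6468 11 (by decide +kernel) k hf h1 h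
  rcases le_or_gt k 7605 with h | h1
  · exact seg pc36 6469 7605 11 (by decide +kernel) k hf h1 h
  rcases le_or_gt k 8805 with h | h1
  · exact seg pc37 7606 8805 11 (by decide +kernel) k hf h1 h
  exact seg pc38 8806 8810 11 (by decide +kernel) k hf h1 h2

theorem range12 (k : ℕ) (h1 : 8811 ≤ k) (h2 : k ≤ 21868) :
    |(Real.logb 10 (nthPrime (f k + k - 3)))^2 - Real.logb 10 (nthPrime (f k + k - 3))| <
      ((k : ℝ) + 1) * ((f k : ℝ) + 1) - (nthPrime (f k + k - 3) : ℝ) := by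
  have hf : f k = 12 := by
    have g1 := f_ge 8811 11 k (by norm_num) h1 (by norm_num)
    have g2 := f_le 21868 12 k (by omega) h2 (by norm_num)
    omega
  rcases le_or_gt k 10813 with h | h1
  · exact seg pc39 8811 10813 12 (by decide +kernel) k hf h1 h
  rcases le_or_gt k 13037 with h | h1
  · exact seg pc40 10814 13037 12 (by decide +kernel) k hf h1 h
  rcases le_or_gt k 15431 with h | h1
  · exact seg pc41 13038 15431 12 (by decide +kernel) k hf h1 h
  rcases le_or_gt k 18013 with h | h1
  · exact seg pc42 15432 18013 12 (by decide +kernel) k hf h1 h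
  rcases le_or_gt k 20738 with h | h1
  · exact seg pc43 18014 20738 12 (by decide +kernel) k hf h1 h
  exact seg pc44 20739 21868 12 (by decide +kernel) k hf h1 h2

theorem range13 (k : ℕ) (h1 : 21869 ≤ k) (h2 : k ≤ 54278) :
    |(Real.logb 10 (nthPrime (f k + k - 3)))^2 - Real.logb 10 (nthPrime (f k + k - 3))| <
      ((k : ℝ) + 1) * ((f k : ℝ) + 1) - (nthPrime (f k + k - 3) : ℝ) := by
  have hf : f k = 13 := by
    have g1 := f_ge 21869 12 k (by norm_num) h1 (by norm_num)
    have g2 := f_le 54278 13 k (by omega) h2 (by norm_num)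
    omega
  rcases le_or_gt k 26478 with h | h1
  · exact seg pc45 21869 26478 13 (by decide +kernel) k hf h1 h
  rcases le_or_gt k 31551 with h | h1
  · exact seg pc46 26479 31551 13 (by decide +kernel) k hf h1 h
  rcases le_or_gt k 37050 with h | h1
  · exact seg pc47 31552 37050 13 (by decide +kernel) k hf h1 h
  rcases le_or_gt k 42938 with h | h1
  · exact seg pc48 37051 42938 13 (by decide +kernel) k hf h1 h
  rcases le_or_gt k 49160 with h | h1
  · exact seg pc49 42939 49160 13 (by decide +kernel) k hf h1 h
  exact seg pc50 49161 54278 13 (by decide +kernel) k hf h1 h2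

theorem range14 (k : ℕ) (h1 : 54279 ≤ k) (h2 : k ≤ 55000) :
    |(Real.logb 10 (nthPrime (f k + k - 3)))^2 - Real.logb 10 (nthPrime (f k + k - 3))| <
      ((k : ℝ) + 1) * ((f k : ℝ) + 1) - (nthPrime (f k + k - 3) : ℝ) := by
  have hf : f k = 14 := by
    have g1 := f_ge 54279 13 k (by norm_num) h1 (by norm_num)
    have g2 := f_le 55000 14 k (by omega) h2 (by norm_num)
    omega
  exact seg pc51 54279 55000 14 (by decide +kernel) k hf h1 h2

theorem small (k F c Y : ℕ) (hf : f k = F) (hk : 5 ≤ k) (hp : c ≤ Nat.primeCounting Y)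
    (hY : Y < 100) (hs : Y + 4 ≤ (k + 1) * (F + 1)) (hn : F + k ≤ c + 3) :
    |(Real.logb 10 (nthPrime (f k + k - 3)))^2 - Real.logb 10 (nthPrime (f k + k - 3))| <
      ((k : ℝ) + 1) * ((f k : ℝ) + 1) - (nthPrime (f k + k - 3) : ℝ) := by
  apply concl k 2 Y (by norm_num) (by omega)
  · rw [hf]
    omega
  · omega
  · omega

theorem range3 (k : ℕ) (h1 : 5 ≤ k) (h2 : k ≤ 6) :
    |(Real.logb 10 (nthPrime (f k + k - 3)))^2 - Real.logb 10 (nthPrime (f k + k - 3))| <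
      ((k : ℝ) + 1) * ((f k : ℝ) + 1) - (nthPrime (f k + k - 3) : ℝ) := by
  have hf : f k = 3 := by
    have g1 := f_ge 5 2 k (by norm_num) h1 (by norm_num)
    have g2 := f_le 6 3 k (by omega) h2 (by norm_num)
    omega
  exact small k 3 8 20 hf h1 (by decide +kernel) (by norm_num) (by omega) (by omega)

theorem range4 (k : ℕ) (h1 : 7 ≤ k) (h2 : k ≤ 15) :
    |(Real.logb 10 (nthPrime (f k + k - 3)))^2 - Real.logb 10 (nthPrime (f k + k - 3))| <
      ((k : ℝ) + 1) * ((f k : ℝ) + 1) - (nthPrime (f k + k - 3) : ℝ) := by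
  have hf : f k = 4 := by
    have g1 := f_ge 7 3 k (by norm_num) h1 (by norm_num)
    have g2 := f_le 15 4 k (by omega) h2 (by norm_num)
    omega
  rcases le_or_gt k 10 with h | h
  · exact small k 4 11 36 hf (by omega) (by decide +kernel) (by norm_num) (by omega) (by omega)
  · exact small k 4 16 56 hf (by omega) (by decide +kernel) (by norm_num) (by omega) (by omega)

/-- Lemma 1: for all `k ≥ 5`,
`|(log p_{f(k)+k-3})² - log p_{f(k)+k-3}| < (k+1)(f(k)+1) - p_{f(k)+k-3}`,
where `log` is the base-10 logarithm. -/
theorem lemma_one (k : ℕ) (hk : 5 ≤ k) :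
    |(Real.logb 10 (nthPrime (f k + k - 3)))^2 - Real.logb 10 (nthPrime (f k + k - 3))| <
      ((k : ℝ) + 1) * ((f k : ℝ) + 1) - (nthPrime (f k + k - 3) : ℝ) := by
  rcases le_or_gt k 6 with h | hk
  · exact range3 k hk h
  rcases le_or_gt k 15 with h | hk
  · exact range4 k hk h
  rcases le_or_gt k 37 with h | hk
  · exact range5 k hk h
  rcases le_or_gt k 93 with h | hk
  · exact range6 k hk h
  rcases le_or_gt k 232 with h | hk
  · exact range7 k hk h
  rcases le_or_gt k 576 with h | hk
  · exact range8 k hk h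
  rcases le_or_gt k 1430 with h | hk
  · exact range9 k hk h
  rcases le_or_gt k 3549 with h | hk
  · exact range10 k hk h
  rcases le_or_gt k 8810 with h | hk
  · exact range11 k hk h
  rcases le_or_gt k 21868 with h | hk
  · exact range12 k hk h
  rcases le_or_gt k 54278 with h | hk
  · exact range13 k hk h
  rcases le_or_gt k 55000 with h | hk
  · exact range14 k hk h
  rcases lt_or_ge k 2100000 with h | h
  · have hF : f k ≤ k := by
      have := f_le 2100000 18 k (by omega) h.le (by norm_num)
      omega
    exact concl_main k (f k) (by omega) rfl hF (tier1 k (by omega) h)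
  · obtain ⟨hF, hp⟩ := tier2 k h
    exact concl_main k (f k) (by omega) rfl hF.le hp
end

section
/- For every integer n ≥ 5, the inequality (2n/9 + 4) · (log(n · ln(n · ln n)))² > n holds, where ln denotes the natural logarithm and log denotes the base-10 logarithm. -/
theorem log_lower (x : ℝ) (r s : ℕ) (hs : 0 < s) (hx : 0 < x)
    (h : (2.7182818286 : ℝ) ^ r ≤ x ^ s) : (r : ℝ) / s ≤ Real.log x := by
  have hs' : (0 : ℝ) < s := by exact_mod_cast hs
  have h1 : Real.exp 1 ^ r ≤ x ^ s :=
    (pow_le_pow_left₀ (Real.exp_pos 1).le Real.exp_one_lt_d9.le r).trans h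
  have h2 := Real.log_le_log (by positivity) h1
  rw [Real.log_pow, Real.log_pow, Real.log_exp] at h2
  rw [div_le_iff₀ hs']
  linarith

theorem logb_lower (n : ℕ) (m a b : ℝ) (r s r' s' p q : ℕ) (hm : 0 < m) (hmn : m ≤ n)
    (hs : 0 < s) (hs' : 0 < s') (hq : 0 < q) (ha : a = r / s) (hb : b = r' / s')
    (ha0 : 0 < a) (hb0 : 0 < b)
    (h1 : (2.7182818286 : ℝ) ^ r ≤ m ^ s) (h2 : (2.7182818286 : ℝ) ^ r' ≤ (m * a) ^ s')
    (h3 : (10 : ℝ) ^ p ≤ (m * b) ^ q) :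
    (p : ℝ) / q ≤ Real.logb 10 ((n : ℝ) * Real.log ((n : ℝ) * Real.log n)) := by
  have hq' : (0 : ℝ) < q := by exact_mod_cast hq
  have e1 : a ≤ Real.log n := by
    rw [ha]
    exact (log_lower m r s hs hm h1).trans (Real.log_le_log hm hmn)
  have e2 : m * a ≤ n * Real.log n := by gcongr
  have e3 : b ≤ Real.log (n * Real.log n) := by
    rw [hb]
    exact (log_lower (m * a) r' s' hs' (by positivity) h2).trans
      (Real.log_le_log (by positivity) e2)
  have e4 : m * b ≤ n * Real.log (n * Real.log n) := by gcongr
  have e5 : (10 : ℝ) ^ p ≤ (n * Real.log (n * Real.log n)) ^ q :=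
    h3.trans (pow_le_pow_left₀ (by positivity) e4 q)
  have e6 := Real.logb_le_logb_of_le (b := 10) (by norm_num) (by positivity) e5
  rw [Real.logb_pow, Real.logb_pow, Real.logb_self_eq_one (by norm_num)] at e6
  rw [div_le_iff₀ hq']
  linarith

theorem finish_bound (x L c : ℝ) (hx : 0 ≤ x) (hc : 0 ≤ c) (hL : c ≤ L)
    (h : x < (2 * x / 9 + 4) * c ^ 2) : (2 * x / 9 + 4) * L ^ 2 > x := by
  have : c ^ 2 ≤ L ^ 2 := pow_le_pow_left₀ hc hL 2
  have h2 : (2 * x / 9 + 4) * c ^ 2 ≤ (2 * x / 9 + 4) * L ^ 2 := by gcongr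
  linarith

/-- Lemma 3: for every integer `n ≥ 5`,
`(2n/9 + 4) · (log(n · ln(n · ln n)))² > n`, where `ln` is the natural
logarithm and `log` is the base-10 logarithm. -/
theorem lemma_three (n : ℕ) (hn : 5 ≤ n) :
    (2 * (n : ℝ) / 9 + 4) *
      (Real.logb 10 ((n : ℝ) * Real.log ((n : ℝ) * Real.log n)))^2 > (n : ℝ) := by
  have hn0 : (0 : ℝ) ≤ n := by positivity
  have key : ∀ (l u : ℕ) , l ≤ n → n ≤ u → (l : ℝ) ≤ n ∧ (n : ℝ) ≤ u :=
    fun l u h1 h2 => ⟨by exact_mod_cast h1, by exact_mod_cast h2⟩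
  rcases Nat.lt_or_ge n 6 with h | h6
  · obtain ⟨k1, k2⟩ := key 5 5 hn (by omega)
    push_cast at k1 k2
    refine finish_bound _ _ _ hn0 (by positivity)
      (logb_lower n 5 (3/2) 2 3 2 2 1 1 1 ?_ ?_ ?_ ?_ ?_ ?_ ?_ ?_ ?_ ?_ ?_ ?_) ?_ <;> norm_num <;> first | omega | linarith
  rcases Nat.lt_or_ge n 7 with h | h7
  · obtain ⟨k1, k2⟩ := key 6 6 h6 (by omega)
    push_cast at k1 k2
    refine finish_bound _ _ _ hn0 (by positivity)
      (logb_lower n 6 (7/4) (7/3) 7 4 7 3 11 10 ?_ ?_ ?_ ?_ ?_ ?_ ?_ ?_ ?_ ?_ ?_ ?_) ?_ <;> norm_num <;> first | omega | linarith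
  rcases Nat.lt_or_ge n 10 with h | h10
  · obtain ⟨k1, k2⟩ := key 7 9 h7 (by omega)
    push_cast at k1 k2
    refine finish_bound _ _ _ hn0 (by positivity)
      (logb_lower n 7 (19/10) (18/7) 19 10 18 7 5 4 ?_ ?_ ?_ ?_ ?_ ?_ ?_ ?_ ?_ ?_ ?_ ?_) ?_ <;> norm_num <;> first | omega | linarith
  rcases Nat.lt_or_ge n 15 with h | h15
  · obtain ⟨k1, k2⟩ := key 10 14 h10 (by omega)
    push_cast at k1 k2
    refine finish_bound _ _ _ hn0 (by positivity)
      (logb_lower n 10 2 (14/5) 2 1 14 5 10 7 ?_ ?_ ?_ ?_ ?_ ?_ ?_ ?_ ?_ ?_ ?_ ?_) ?_ <;> norm_num <;> first | omega | linarith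
  rcases Nat.lt_or_ge n 32 with h | h32
  · obtain ⟨k1, k2⟩ := key 15 31 h15 (by omega)
    push_cast at k1 k2
    refine finish_bound _ _ _ hn0 (by positivity)
      (logb_lower n 15 (5/2) (7/2) 5 2 7 2 17 10 ?_ ?_ ?_ ?_ ?_ ?_ ?_ ?_ ?_ ?_ ?_ ?_) ?_ <;> norm_num <;> first | omega | linarith
  · obtain ⟨k1, -⟩ := key 32 n h32 le_rfl
    push_cast at k1
    refine finish_bound _ _ _ hn0 (by positivity)
      (logb_lower n 32 (10/3) (9/2) 10 3 9 2 15 7 ?_ ?_ ?_ ?_ ?_ ?_ ?_ ?_ ?_ ?_ ?_ ?_) ?_ <;> norm_num <;> first | omega | linarith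
end

section
/- Assume Firoozbakht's conjecture: p_{m+1} < p_m^{1 + 1/m} for every integer m ≥ 1, where p_m denotes the m-th prime number (p_1 = 2, p_2 = 3, …). Then for all integers k ≥ 2 and n ≥ 1, the number of primes p with n ≤ p ≤ k·n is at most k·n/9 + k². -/
/-- The product of all primes below `512`. -/
def sievePrimorial : ℕ :=
  31964081287196888554640742530273949712805599189441373009521636182430667982828077742788853029807931798207106885718293402541861369758591699412090677759187666930105491469725350718941073722934985042092154205321144030

/-- Bit mask of the primes below `512`. -/
def sieveMask : ℕ :=
  1703806605896072823853452820875856471690324421502329734630516674131882609769400962334582631898191304282096542762193211716358712101421767999181276463114412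

/-- A computable upper bound for the indicator function of the primes. -/
def sieveInd (m : ℕ) : ℕ :=
  cond (Nat.beq (Nat.gcd m sievePrimorial) 1) 1 (Nat.land 1 (Nat.shiftRight sieveMask m))

theorem sieveInd_small : ∀ m < 512, Nat.Prime m → 1 ≤ sieveInd m := by
  have h : ∀ m < 512, (Nat.minFac m = m ∧ 2 ≤ m) → 1 ≤ sieveInd m := by decide +kernel
  intro m hm hp
  exact h m hm ⟨hp.minFac_eq, hp.two_le⟩

theorem sievePrimorial_dvd : sievePrimorial ∣ Nat.factorial 511 := by decide +kernel

theorem one_le_sieveInd {m : ℕ} (hp : Nat.Prime m) : 1 ≤ sieveInd m := by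
  by_cases hm : m < 512
  · exact sieveInd_small m hm hp
  · have hc : Nat.gcd m sievePrimorial = 1 := by
      refine (Nat.Prime.coprime_iff_not_dvd hp).2 fun hd => ?_
      have := (hp.dvd_factorial).1 (hd.trans sievePrimorial_dvd)
      omega
    simp [sieveInd, hc]

/-- Sum of `sieveInd` over `s, …, s + j - 1`. -/
def sieveSum (s : ℕ) : ℕ → ℕ
  | 0 => 0
  | j + 1 => Nat.add (sieveSum s j) (sieveInd (Nat.add s j))

theorem sieveSum_eq (s j : ℕ) : sieveSum s j = ∑ m ∈ Finset.Ico s (s + j), sieveInd m := by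
  induction j with
  | zero => simp [sieveSum]
  | succ j ih =>
    rw [← add_assoc, Finset.sum_Ico_succ_top (by omega), ← ih]
    rfl

/-- Evaluate the natural number before passing it on. -/
def forceNat (c : ℕ) (f : ℕ → Bool) : Bool :=
  Nat.rec (motive := fun _ => Bool) (f 0) (fun t _ => f (Nat.succ t)) c

theorem forceNat_eq (c : ℕ) (f : ℕ → Bool) : forceNat c f = f c := by
  cases c <;> rfl

/-- Verification loop for a fixed value of `k`. -/
def windowLoop (k : ℕ) : ℕ → ℕ → ℕ → Bool
  | 0, _, _ => true
  | t + 1, n, c =>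
    cond (Nat.ble (Nat.mul 9 c) (Nat.add (Nat.mul k n) (Nat.mul 9 (Nat.mul k k))))
      (forceNat (Nat.succ n) fun n' =>
        forceNat (Nat.sub (Nat.add c (sieveSum (Nat.succ (Nat.mul k n)) k)) (sieveInd n)) fun c' =>
          windowLoop k t n' c')
      false

theorem windowLoop_spec (k : ℕ) (hk : 1 ≤ k) (t : ℕ) : ∀ n c,
    c = ∑ m ∈ Finset.Ico n (k * n + 1), sieveInd m → windowLoop k t n c = true →
    ∀ n', n ≤ n' → n' < n + t →
      9 * ∑ m ∈ Finset.Ico n' (k * n' + 1), sieveInd m ≤ k * n' + 9 * (k * k) := by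
  induction t with
  | zero => intro n c _ _ n' h1 h2; omega
  | succ t ih =>
    intro n c hc hl n' h1 h2
    rw [windowLoop] at hl
    simp only [forceNat_eq, cond_eq_ite, Nat.ble_eq, ite_eq_iff, Bool.false_eq_true, and_false,
      or_false] at hl
    obtain ⟨hb, hl⟩ := hl
    rcases Nat.eq_or_lt_of_le h1 with rfl | h1
    · rw [← hc]; exact hb
    · refine ih (n + 1) _ ?_ hl n' h1 (by omega)
      rw [sieveSum_eq, hc]
      have hle : n + 1 ≤ k * n + 1 := by nlinarith
      have e1 := Finset.sum_eq_sum_Ico_succ_bot (show n < k * n + 1 by omega) sieveInd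
      have e2 := Finset.sum_Ico_consecutive sieveInd hle
        (show k * n + 1 ≤ k * (n + 1) + 1 by nlinarith)
      have e3 : Nat.succ (Nat.mul k n) + k = k * (n + 1) + 1 := by
        show k * n + 1 + k = _
        ring
      rw [e3]
      show _ + ∑ m ∈ Finset.Ico (k * n + 1) (k * (n + 1) + 1), sieveInd m - _ = _
      omega

theorem window_of_loop (k : ℕ) (hk : 1 ≤ k) (t : ℕ)
    (h : windowLoop k t 1 (sieveSum 1 k) = true) (n : ℕ) (hn : 1 ≤ n) (hnt : n ≤ t) :
    9 * ((Finset.Icc n (k * n)).filter Nat.Prime).card ≤ k * n + 9 * (k * k) := by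
  have h1 := windowLoop_spec k hk t 1 _ (by rw [sieveSum_eq, mul_one, add_comm]) h n hn (by omega)
  refine le_trans (Nat.mul_le_mul_left 9 ?_) h1
  rw [Finset.card_filter]
  have : Finset.Icc n (k * n) = Finset.Ico n (k * n + 1) := by ext; simp
  rw [this]
  refine Finset.sum_le_sum fun m _ => ?_
  split_ifs with hp
  · exact one_le_sieveInd hp
  · exact Nat.zero_le _

/-- Verification loop for bounds of the prime counting function. -/
def piLoop (K M L e : ℕ) : ℕ → ℕ → ℕ → Bool
  | 0, _, c => Nat.ble c e
  | t + 1, i, c =>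
    forceNat (Nat.add c (Nat.add (sieveInd (Nat.add (Nat.mul 6 i) 1))
        (sieveInd (Nat.add (Nat.mul 6 i) 5)))) fun c' =>
      cond (Nat.ble (Nat.mul K c') (Nat.add (Nat.mul M (Nat.mul 6 i)) L))
        (forceNat (Nat.succ i) fun i' => piLoop K M L e t i' c')
        false

theorem count_step (i : ℕ) (hi : 1 ≤ i) :
    Nat.count Nat.Prime (6 * (i + 1)) ≤
      Nat.count Nat.Prime (6 * i) + (sieveInd (6 * i + 1) + sieveInd (6 * i + 5)) := by
  have two : ∀ m, 2 < m → 2 ∣ m → ¬ Nat.Prime m := fun m h1 h2 hp => by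
    have := (Nat.prime_dvd_prime_iff_eq Nat.prime_two hp).1 h2
    omega
  have three : ∀ m, 3 < m → 3 ∣ m → ¬ Nat.Prime m := fun m h1 h2 hp => by
    have := (Nat.prime_dvd_prime_iff_eq Nat.prime_three hp).1 h2
    omega
  have h0 := two (6 * i) (by omega) (by omega)
  have h2 := two (6 * i + 2) (by omega) (by omega)
  have h3 := three (6 * i + 3) (by omega) (by omega)
  have h4 := two (6 * i + 4) (by omega) (by omega)
  have e : 6 * (i + 1) = 6 * i + 1 + 1 + 1 + 1 + 1 + 1 := by ring
  rw [e]
  simp only [Nat.count_succ, add_assoc, Nat.reduceAdd, h0, h2, h3, h4, if_false]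
  have a1 : (if Nat.Prime (6 * i + 1) then 1 else 0) ≤ sieveInd (6 * i + 1) := by
    split_ifs with hp
    · exact one_le_sieveInd hp
    · exact Nat.zero_le _
  have a5 : (if Nat.Prime (6 * i + 5) then 1 else 0) ≤ sieveInd (6 * i + 5) := by
    split_ifs with hp
    · exact one_le_sieveInd hp
    · exact Nat.zero_le _
  omega

theorem piLoop_spec (K M L e t : ℕ) : ∀ i c, 1 ≤ i → Nat.count Nat.Prime (6 * i) ≤ c →
    piLoop K M L e t i c = true →
    (∀ N, 6 * i ≤ N → N < 6 * (i + t) → K * Nat.primeCounting N ≤ M * N + L) ∧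
      Nat.count Nat.Prime (6 * (i + t)) ≤ e := by
  induction t with
  | zero =>
    intro i c _ hc hl
    refine ⟨fun N h1 h2 => by omega, hc.trans ?_⟩
    simpa [piLoop] using hl
  | succ t ih =>
    intro i c hi hc hl
    rw [piLoop] at hl
    simp only [forceNat_eq, cond_eq_ite, Nat.ble_eq, ite_eq_iff, Bool.false_eq_true, and_false,
      or_false] at hl
    obtain ⟨hb, hl⟩ := hl
    have hc' := (count_step i hi).trans (Nat.add_le_add_right hc _)
    obtain ⟨g1, g2⟩ := ih (i + 1) _ (by omega) hc' hl
    refine ⟨fun N h1 h2 => ?_, ?_⟩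
    · by_cases hN : 6 * (i + 1) ≤ N
      · exact g1 N hN (by omega)
      · have hpi : Nat.primeCounting N ≤ Nat.count Nat.Prime (6 * (i + 1)) := by
          rw [Nat.primeCounting, Nat.primeCounting']
          exact Nat.count_monotone _ (by omega)
        calc K * Nat.primeCounting N ≤ _ := Nat.mul_le_mul_left K (hpi.trans hc')
          _ ≤ M * (6 * i) + L := hb
          _ ≤ M * N + L := by gcongr
    · have : i + (t + 1) = i + 1 + t := by ring
      rw [this]; exact g2

theorem piLoop1 : piLoop 9 1 1296 2781 4199 1 3 = true := by decide +kernel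
theorem piLoop2 : piLoop 9 1 0 12250 17645 4200 2781 = true := by decide +kernel
theorem piLoop3 : piLoop 153 16 0 23002 21847 21845 12250 = true := by decide +kernel

/-- Upper bound for the number of primes in `(m + 1, 2 m + 1]` through binomial coefficients. -/
theorem binom_step (m e : ℕ) (he : 2 ^ e ≤ m + 1) :
    e * Nat.primeCounting (2 * m + 1) ≤ e * Nat.primeCounting (m + 1) + 2 * m := by
  have h1 := primorial_add_le (show m ≤ m + 1 by omega)
  rw [primorial_add] at h1
  have h2 := Nat.le_of_mul_le_mul_left h1 (primorial_pos _)
  have h3 : (m + 1 + m).choose (m + 1) ≤ 4 ^ m := by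
    have := Nat.choose_middle_le_pow m
    rwa [← Nat.choose_symm_of_eq_add (show 2 * m + 1 = (m + 1) + m by ring),
      show 2 * m + 1 = m + 1 + m by ring] at this
  set s := (Finset.Ico (m + 1 + 1) (m + 1 + m + 1)).filter Nat.Prime with hs
  have h4 : (2 ^ e) ^ s.card ≤ ∏ p ∈ s, p := by
    refine Finset.pow_card_le_prod s _ _ fun p hp => ?_
    rw [hs, Finset.mem_filter, Finset.mem_Ico] at hp
    omega
  have h5 : 2 ^ (e * s.card) ≤ 2 ^ (2 * m) := by
    rw [pow_mul, pow_mul]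
    exact h4.trans (h2.trans h3)
  have h6 : e * s.card ≤ 2 * m := (Nat.pow_le_pow_iff_right (by norm_num)).1 h5
  have h7 : Nat.primeCounting (2 * m + 1) ≤ Nat.primeCounting (m + 1) + s.card := by
    simp only [Nat.primeCounting, Nat.primeCounting', Nat.count_eq_card_filter_range]
    refine le_trans (Finset.card_le_card ?_) (Finset.card_union_le _ _)
    intro p hp
    simp only [hs, Finset.mem_union, Finset.mem_filter, Finset.mem_range, Finset.mem_Ico] at hp ⊢
    have := hp.2
    simp only [this, and_true]
    omega
  calc e * Nat.primeCounting (2 * m + 1) ≤ e * (Nat.primeCounting (m + 1) + s.card) :=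
        Nat.mul_le_mul_left e h7
    _ ≤ _ := by rw [mul_add]; omega

theorem count_six : Nat.count Nat.Prime (6 * 1) ≤ 3 := by decide

theorem pi_small (N : ℕ) (h : N < 25200) : 9 * Nat.primeCounting N ≤ N + 1296 := by
  by_cases h6 : 6 ≤ N
  · have := (piLoop_spec _ _ _ _ _ 1 3 le_rfl count_six piLoop1).1 N (by omega) (by omega)
    omega
  · have h1 : Nat.primeCounting N ≤ 3 := by
      refine le_trans ?_ count_six
      rw [Nat.primeCounting, Nat.primeCounting']
      exact Nat.count_monotone _ (by omega)
    omega

theorem pi_mid (N : ℕ) (h : 25200 ≤ N) (h' : N < 131070) : 9 * Nat.primeCounting N ≤ N := by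
  have e1 := (piLoop_spec _ _ _ _ _ 1 3 le_rfl count_six piLoop1).2
  have := (piLoop_spec _ _ _ _ _ 4200 _ (by omega) e1 piLoop2).1 N (by omega) (by omega)
  omega

theorem pi_mid2 (N : ℕ) (h : 131070 ≤ N) (h' : N < 262152) :
    153 * Nat.primeCounting N ≤ 16 * N := by
  have e1 := (piLoop_spec _ _ _ _ _ 1 3 le_rfl count_six piLoop1).2
  have e2 := (piLoop_spec _ _ _ _ _ 4200 _ (by omega) e1 piLoop2).2
  have := (piLoop_spec _ _ _ _ _ 21845 _ (by omega) e2 piLoop3).1 N (by omega) (by omega)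
  omega

theorem pi_large (N : ℕ) (h : 25200 ≤ N) : 9 * Nat.primeCounting N ≤ N := by
  induction N using Nat.strong_induction_on with
  | _ N ih =>
    by_cases h1 : N < 131070
    · exact pi_mid N h h1
    by_cases h2 : N < 262152
    · have := pi_mid2 N (by omega) h2
      omega
    -- the odd case
    have odd : ∀ m, 2 * m + 1 ≤ N → 262151 ≤ 2 * m + 1 →
        9 * Nat.primeCounting (2 * m + 1) ≤ 2 * m + 1 := by
      intro m hm hm'
      by_cases h3 : m + 1 < 2 ^ 18
      · have b := binom_step m 17 (by norm_num; omega)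
        have c := pi_mid2 (m + 1) (by omega) (by norm_num at h3; omega)
        omega
      · have b := binom_step m 18 (by omega)
        have c := ih (m + 1) (by omega) (by omega)
        omega
    obtain ⟨m, hm | hm⟩ := Nat.even_or_odd' N
    · obtain ⟨j, rfl⟩ : ∃ j, m = j + 1 := ⟨m - 1, by omega⟩
      have b := odd j (by omega) (by omega)
      have e : Nat.primeCounting N = Nat.primeCounting (2 * j + 1) := by
        have hN : ¬ Nat.Prime (2 * j + 1 + 1) := fun hp => by
          have := (Nat.prime_dvd_prime_iff_eq Nat.prime_two hp).1 (by omega)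
          omega
        rw [hm, show 2 * (j + 1) = 2 * j + 1 + 1 by ring, Nat.primeCounting,
          Nat.primeCounting', Nat.count_succ, if_neg hN]
        rfl
      omega
    · have b := odd m (by omega) (by omega)
      rw [hm]; exact b

theorem windowLoop2 : windowLoop 2 12600 1 (sieveSum 1 2) = true := by decide +kernel
theorem windowLoop3 : windowLoop 3 8400 1 (sieveSum 1 3) = true := by decide +kernel
theorem windowLoop4 : windowLoop 4 6300 1 (sieveSum 1 4) = true := by decide +kernel
theorem windowLoop5 : windowLoop 5 5040 1 (sieveSum 1 5) = true := by decide +kernel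
theorem windowLoop6 : windowLoop 6 4200 1 (sieveSum 1 6) = true := by decide +kernel
theorem windowLoop7 : windowLoop 7 3600 1 (sieveSum 1 7) = true := by decide +kernel
theorem windowLoop8 : windowLoop 8 3150 1 (sieveSum 1 8) = true := by decide +kernel
theorem windowLoop9 : windowLoop 9 2800 1 (sieveSum 1 9) = true := by decide +kernel
theorem windowLoop10 : windowLoop 10 2520 1 (sieveSum 1 10) = true := by decide +kernel
theorem windowLoop11 : windowLoop 11 2290 1 (sieveSum 1 11) = true := by decide +kernel

theorem count_le_pi (n N : ℕ) :
    ((Finset.Icc n N).filter Nat.Prime).card ≤ Nat.primeCounting N := by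
  rw [Nat.primeCounting, Nat.primeCounting', Nat.count_eq_card_filter_range]
  refine Finset.card_le_card fun p hp => ?_
  simp only [Finset.mem_filter, Finset.mem_range, Finset.mem_Icc] at hp ⊢
  exact ⟨by omega, hp.2⟩

theorem nat_bound (k n : ℕ) (hk : 2 ≤ k) (hn : 1 ≤ n) :
    9 * ((Finset.Icc n (k * n)).filter Nat.Prime).card ≤ k * n + 9 * (k * k) := by
  have hpi := count_le_pi n (k * n)
  by_cases hN : 25200 ≤ k * n
  · have := pi_large _ hN
    omega
  by_cases hk12 : 12 ≤ k
  · have h1 := pi_small (k * n) (by omega)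
    have h2 : 144 ≤ k * k := by nlinarith
    omega
  have hk11 : k ≤ 11 := by omega
  interval_cases k
  · exact window_of_loop 2 (by omega) _ windowLoop2 n hn (by omega)
  · exact window_of_loop 3 (by omega) _ windowLoop3 n hn (by omega)
  · exact window_of_loop 4 (by omega) _ windowLoop4 n hn (by omega)
  · exact window_of_loop 5 (by omega) _ windowLoop5 n hn (by omega)
  · exact window_of_loop 6 (by omega) _ windowLoop6 n hn (by omega)
  · exact window_of_loop 7 (by omega) _ windowLoop7 n hn (by omega)
  · exact window_of_loop 8 (by omega) _ windowLoop8 n hn (by omega)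
  · exact window_of_loop 9 (by omega) _ windowLoop9 n hn (by omega)
  · exact window_of_loop 10 (by omega) _ windowLoop10 n hn (by omega)
  · exact window_of_loop 11 (by omega) _ windowLoop11 n hn (by omega)

/-- Theorem 2: assuming Firoozbakht's conjecture
(`p_{m+1} < p_m^{1+1/m}` for all `m ≥ 1`), for all integers `k ≥ 2` and `n ≥ 1`
the number of primes in `[n, kn]` is at most `kn/9 + k²`. -/
theorem prime_count_upper_bound
    (firoozbakht : ∀ m : ℕ, 1 ≤ m →
      (nthPrime (m + 1) : ℝ) < (nthPrime m : ℝ) ^ ((1 : ℝ) + 1 / (m : ℝ)))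
    (k n : ℕ) (hk : 2 ≤ k) (hn : 1 ≤ n) :
    (((Finset.Icc n (k * n)).filter Nat.Prime).card : ℝ) ≤
      (k : ℝ) * (n : ℝ) / 9 + (k : ℝ)^2 := by
  have h := nat_bound k n hk hn
  have h' : (9 : ℝ) * (((Finset.Icc n (k * n)).filter Nat.Prime).card : ℝ) ≤
      (k : ℝ) * (n : ℝ) + 9 * ((k : ℝ) * (k : ℝ)) := by exact_mod_cast h
  nlinarith
end
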